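/- arXiv:1512.04041 — 2 statements merged into one kernel-verified Lean document; each statement's English description precedes it below -/
import Mathlib

section
/- Let a = (a_n)_{n≥1} be a non-ultimately periodic sequence over F_q[T] with deg a_n ≥ 1 for all n ≥ 1. Assume that the sequence (|a_n|)_{n≥1} is bounded and that limsup_{n→∞} p(a, n)/n < +∞. Set ξ := [0, a_1, a_2, …] ∈ F_q((T^{-1})). Then the Diophantine exponent Dio(a) is finite if and only if ξ is not a U_2-number, i.e., if and only if it is not the case that w_2(ξ) = +∞ while w_1(ξ) < +∞. -/
open Polynomial Filter
open scoped ENNReal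

noncomputable section

namespace Ooto

variable (Fq : Type) [Field Fq] [Fintype Fq]

/-- `F_q((T⁻¹))`, realized as formal Laurent series in the variable `X = T⁻¹`. -/
abbrev K := LaurentSeries Fq

/-- The element `T = X⁻¹` of `F_q((T⁻¹))`. -/
def TT : K Fq := HahnSeries.single (-1 : ℤ) (1 : Fq)

/-- The natural embedding of `F_q[T]` into `F_q((T⁻¹))`, sending `T` to `T`. -/
def polyToK : Polynomial Fq →+* K Fq := Polynomial.eval₂RingHom HahnSeries.C (TT Fq)

open Classical in
/-- The absolute value on `F_q((T⁻¹))`: `|0| = 0` and `|ξ| = q^{-N}` where `N` is the order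
of `ξ` as a series in `T⁻¹`. -/
def kabs (f : K Fq) : ℝ := if f = 0 then 0 else (Fintype.card Fq : ℝ) ^ (-f.order)

/-- A fixed algebraic closure of `F_q((T⁻¹))`. -/
abbrev L := AlgebraicClosure (K Fq)

def toL : K Fq →+* L Fq := algebraMap (K Fq) (L Fq)

def φ : Polynomial Fq →+* L Fq := (toL Fq).comp (polyToK Fq)

/-- Evaluation of `P ∈ (F_q[T])[X]` at `ξ ∈ F_q((T⁻¹))`. -/
def evalK (P : Polynomial (Polynomial Fq)) (ξ : K Fq) : K Fq :=
  Polynomial.eval₂ (polyToK Fq) ξ P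

/-- Evaluation of `P ∈ (F_q[T])[X]` at a point of the algebraic closure. -/
def evalL (P : Polynomial (Polynomial Fq)) (α : L Fq) : L Fq :=
  Polynomial.eval₂ (φ Fq) α P

/-- Height of a polynomial over `F_q[T]`: the maximum of the absolute values of its
coefficients. -/
def Hpoly (P : Polynomial (Polynomial Fq)) : ℝ := ⨆ i : ℕ, kabs Fq (polyToK Fq (P.coeff i))

/-- `P` is the minimal polynomial of `α`: a non-constant irreducible primitive polynomial in
`(F_q[T])[X]` whose leading coefficient is monic in `T`, vanishing at `α`. -/
def IsMinPolyOf (P : Polynomial (Polynomial Fq)) (α : L Fq) : Prop :=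
  0 < P.natDegree ∧ Irreducible P ∧ P.IsPrimitive ∧ (P.leadingCoeff).Monic ∧ evalL Fq P α = 0

/-- `α` is algebraic over `F_q(T)`. -/
def IsAlgElem (α : L Fq) : Prop := ∃ P, IsMinPolyOf Fq P α

open Classical in
/-- The minimal polynomial of an algebraic element (junk value `0` otherwise). -/
def minPolyPrim (α : L Fq) : Polynomial (Polynomial Fq) :=
  if h : IsAlgElem Fq α then h.choose else 0

/-- Degree of an algebraic element. -/
def degAlg (α : L Fq) : ℕ := (minPolyPrim Fq α).natDegree

/-- Height of an algebraic element. -/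
def heightAlg (α : L Fq) : ℝ := Hpoly Fq (minPolyPrim Fq α)

/-- Inseparable degree of a polynomial `P ∈ (F_q[T])[X]`: the largest power `f = p^j` of the
characteristic such that `P(X) = R(X^f)` for some `R`. -/
def insepDeg (P : Polynomial (Polynomial Fq)) : ℕ :=
  (ringChar Fq) ^ sSup {j : ℕ | ∃ R : Polynomial (Polynomial Fq),
    P = R.comp (Polynomial.X ^ (ringChar Fq) ^ j)}

/-- Inseparable degree of an algebraic element. -/
def insepAlg (α : L Fq) : ℕ := insepDeg Fq (minPolyPrim Fq α)

/-- `α'` is the Galois conjugate of the quadratic element `α` (equal to `α` itself in the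
inseparable case): the minimal polynomial of `α` factors as `A(X - α)(X - α')`. -/
def IsConjOf (α' α : L Fq) : Prop :=
  (minPolyPrim Fq α).natDegree = 2 ∧
  (minPolyPrim Fq α).map (φ Fq) =
    Polynomial.C (φ Fq (minPolyPrim Fq α).leadingCoeff) *
      (Polynomial.X - Polynomial.C α) * (Polynomial.X - Polynomial.C α')

/-- `v` is an absolute value on the algebraic closure of `F_q((T⁻¹))` extending `kabs`
(such an extension exists and is unique). -/
structure IsAbsExt (v : L Fq → ℝ) : Prop where
  eq_zero_iff : ∀ x, v x = 0 ↔ x = 0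
  map_mul : ∀ x y, v (x * y) = v x * v y
  add_le : ∀ x y, v (x + y) ≤ max (v x) (v y)
  nonneg : ∀ x, 0 ≤ v x
  extends_kabs : ∀ f : K Fq, v (toL Fq f) = kabs Fq f

/-- The exponent `w_n(ξ)`: the supremum of the real numbers `w` such that
`0 < |P(ξ)| ≤ H(P)^{-w}` for infinitely many `P ∈ (F_q[T])[X]` of degree at most `n`. -/
def wExp (n : ℕ) (ξ : K Fq) : EReal :=
  sSup {x : EReal | ∃ w : ℝ, x = (w : EReal) ∧
    {P : Polynomial (Polynomial Fq) | P.natDegree ≤ n ∧ 0 < kabs Fq (evalK Fq P ξ) ∧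
      kabs Fq (evalK Fq P ξ) ≤ Hpoly Fq P ^ (-w)}.Infinite}

/-- The exponent `w_n^*(ξ)`: the supremum of the real numbers `w` such that
`0 < |ξ - α| ≤ H(α)^{-w-1}` for infinitely many algebraic `α` of degree at most `n`. -/
def wStarExp (v : L Fq → ℝ) (n : ℕ) (ξ : K Fq) : EReal :=
  sSup {x : EReal | ∃ w : ℝ, x = (w : EReal) ∧
    {α : L Fq | IsAlgElem Fq α ∧ degAlg Fq α ≤ n ∧ 0 < v (toL Fq ξ - α) ∧
      v (toL Fq ξ - α) ≤ heightAlg Fq α ^ (-w - 1)}.Infinite}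

/-- `pSeq a n = p_{n-1}`, the numerators of the convergents of `[a 0; a 1, a 2, …]`
(with `p_{-1} = 1`). -/
def pSeq (a : ℕ → Polynomial Fq) : ℕ → Polynomial Fq
  | 0 => 1
  | 1 => a 0
  | (n+2) => a (n+1) * pSeq a (n+1) + pSeq a n

/-- `qSeq a n = q_{n-1}`, the denominators of the convergents of `[a 0; a 1, a 2, …]`
(with `q_{-1} = 0`). -/
def qSeq (a : ℕ → Polynomial Fq) : ℕ → Polynomial Fq
  | 0 => 0
  | 1 => 1
  | (n+2) => a (n+1) * qSeq a (n+1) + qSeq a n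

/-- `ξ` has continued fraction expansion `[a 0; a 1, a 2, …]`: each partial quotient `a n`
(`n ≥ 1`) has degree at least one and `|ξ - p_n/q_n| = |q_n|⁻¹|q_{n+1}|⁻¹` for all `n ≥ 0`. -/
def IsCFOf (ξ : K Fq) (a : ℕ → Polynomial Fq) : Prop :=
  (∀ n, 1 ≤ n → 1 ≤ (a n).natDegree) ∧
  ∀ n : ℕ,
    kabs Fq (ξ - polyToK Fq (pSeq Fq a (n+1)) / polyToK Fq (qSeq Fq a (n+1))) =
      (kabs Fq (polyToK Fq (qSeq Fq a (n+1))) * kabs Fq (polyToK Fq (qSeq Fq a (n+2))))⁻¹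

/-- The sequence of partial quotients of `[0; b 0, b 1, b 2, …]`. -/
def cfA (b : ℕ → Polynomial Fq) : ℕ → Polynomial Fq := fun n => if n = 0 then 0 else b (n - 1)

/-- `qden b n` is the denominator `q_n` of the `n`-th convergent of `[0; b 0, b 1, …]`. -/
def qden (b : ℕ → Polynomial Fq) (n : ℕ) : Polynomial Fq := qSeq Fq (cfA Fq b) (n + 1)

/-- `V^w` for a finite word `V` and a real `w ≥ 0`: `⌊w⌋` copies of `V` followed by the prefix
of `V` of length `⌈(w - ⌊w⌋)|V|⌉`. -/
def wordPow {A : Type*} (V : List A) (w : ℝ) : List A :=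
  (List.replicate ⌊w⌋₊ V).flatten ++ V.take ⌈(w - ⌊w⌋₊) * V.length⌉₊

/-- The finite word `l` is a prefix of the infinite word `b`. -/
def IsPrefixOfSeq {A : Type*} (l : List A) (b : ℕ → A) : Prop :=
  ∀ (i : ℕ) (h : i < l.length), l.get ⟨i, h⟩ = b i

/-- Condition `(*)_ρ` for an infinite word. -/
def SatisfiesCond {A : Type*} (b : ℕ → A) (ρ : ℝ) : Prop :=
  ∃ (U V : ℕ → List A) (w : ℕ → ℝ),
    (∀ n, V n ≠ []) ∧ (∀ n, 0 ≤ w n) ∧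
    (∀ n, IsPrefixOfSeq (U n ++ wordPow (V n) (w n)) b) ∧
    (∀ n, ρ * (((U n).length + (V n).length : ℕ) : ℝ) ≤
      (((U n).length + (wordPow (V n) (w n)).length : ℕ) : ℝ)) ∧
    StrictMono fun n => (wordPow (V n) (w n)).length

/-- The Diophantine exponent of an infinite word: the supremum of the `ρ` such that the word
satisfies Condition `(*)_ρ`. -/
def dioExp {A : Type*} (b : ℕ → A) : EReal :=
  sSup {x : EReal | ∃ ρ : ℝ, x = (ρ : EReal) ∧ SatisfiesCond b ρ}

/-- The complexity function: the number of distinct blocks of `n` consecutive letters. -/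
def complexity {A : Type*} (b : ℕ → A) (n : ℕ) : ℕ∞ :=
  {w : Fin n → A | ∃ i : ℕ, ∀ k : Fin n, w k = b (i + k)}.encard

/-- The infinite word `b` is ultimately periodic. -/
def UltimatelyPeriodic {A : Type*} (b : ℕ → A) : Prop :=
  ∃ N T : ℕ, 0 < T ∧ ∀ n, N ≤ n → b (n + T) = b n


section helpers
variable {Fq}

/-- The cardinality of the field, as a real number. -/
def qc (Fq : Type) [Fintype Fq] : ℝ := (Fintype.card Fq : ℝ)

lemma qc_gt : 1 < qc Fq := by
  unfold qc
  exact_mod_cast Fintype.one_lt_card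

lemma qc_pos : 0 < qc Fq := lt_trans one_pos qc_gt

lemma kabs_zero : kabs Fq 0 = 0 := by simp [kabs]

lemma kabs_of_ne {x : K Fq} (h : x ≠ 0) : kabs Fq x = qc Fq ^ (-x.order) := by
  simp [kabs, h, qc]

lemma kabs_pos {x : K Fq} (h : x ≠ 0) : 0 < kabs Fq x := by
  rw [kabs_of_ne h]; exact zpow_pos qc_pos _

lemma kabs_nonneg (x : K Fq) : 0 ≤ kabs Fq x := by
  by_cases h : x = 0
  · rw [h, kabs_zero]
  · exact (kabs_pos h).le

lemma kabs_eq_zero {x : K Fq} : kabs Fq x = 0 ↔ x = 0 := by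
  constructor
  · intro h
    by_contra h0
    exact (kabs_pos h0).ne' h
  · rintro rfl; exact kabs_zero

lemma kabs_pos_iff {x : K Fq} : 0 < kabs Fq x ↔ x ≠ 0 := by
  constructor
  · rintro h rfl
    rw [kabs_zero] at h; exact lt_irrefl _ h
  · exact kabs_pos

lemma kabs_mul (x y : K Fq) : kabs Fq (x * y) = kabs Fq x * kabs Fq y := by
  by_cases hx : x = 0
  · simp [hx, kabs_zero]
  by_cases hy : y = 0
  · simp [hy, kabs_zero]
  rw [kabs_of_ne hx, kabs_of_ne hy, kabs_of_ne (mul_ne_zero hx hy), ← zpow_add₀ qc_pos.ne',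
    HahnSeries.order_mul hx hy]
  congr 1; ring

lemma kabs_neg (x : K Fq) : kabs Fq (-x) = kabs Fq x := by
  by_cases hx : x = 0
  · simp [hx]
  rw [kabs_of_ne hx, kabs_of_ne (neg_ne_zero.2 hx), HahnSeries.order_neg]

lemma kabs_one : kabs Fq 1 = 1 := by
  rw [kabs_of_ne one_ne_zero, HahnSeries.order_one]; simp

lemma kabs_div (x y : K Fq) (hy : y ≠ 0) : kabs Fq (x / y) = kabs Fq x / kabs Fq y := by
  rw [eq_div_iff (kabs_pos hy).ne', ← kabs_mul, div_mul_cancel₀ _ hy]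

lemma kabs_add_le (x y : K Fq) : kabs Fq (x + y) ≤ max (kabs Fq x) (kabs Fq y) := by
  by_cases hx : x = 0
  · simp [hx]
  by_cases hy : y = 0
  · simp [hy]
  by_cases hxy : x + y = 0
  · rw [hxy, kabs_zero]; exact le_max_of_le_left (kabs_nonneg _)
  rw [kabs_of_ne hx, kabs_of_ne hy, kabs_of_ne hxy]
  have := HahnSeries.min_order_le_order_add hxy
  rcases min_le_iff.1 this with h | h
  · exact le_max_of_le_left (zpow_le_zpow_right₀ qc_gt.le (by omega))
  · exact le_max_of_le_right (zpow_le_zpow_right₀ qc_gt.le (by omega))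

lemma kabs_sub_le (x y : K Fq) : kabs Fq (x - y) ≤ max (kabs Fq x) (kabs Fq y) := by
  rw [sub_eq_add_neg, ← kabs_neg y]; exact kabs_add_le _ _

lemma kabs_add_eq {x y : K Fq} (h : kabs Fq y < kabs Fq x) : kabs Fq (x + y) = kabs Fq x := by
  apply le_antisymm
  · exact (kabs_add_le x y).trans (max_le le_rfl h.le)
  · have := kabs_sub_le (x + y) y
    rw [add_sub_cancel_right] at this
    rcases le_max_iff.1 this with h1 | h1
    · exact h1
    · exact absurd h (not_lt.2 h1)

lemma kabs_TT : kabs Fq (TT Fq) = qc Fq := by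
  have h : TT Fq ≠ 0 := by
    unfold TT; simp
  rw [kabs_of_ne h]
  unfold TT
  rw [HahnSeries.order_single one_ne_zero]; simp

lemma kabs_C {c : Fq} (h : c ≠ 0) : kabs Fq (HahnSeries.C c) = 1 := by
  have h' : (HahnSeries.C c : K Fq) ≠ 0 := HahnSeries.C_ne_zero h
  rw [kabs_of_ne h', HahnSeries.order_C]; simp

lemma kabs_pow (x : K Fq) (n : ℕ) : kabs Fq (x ^ n) = kabs Fq x ^ n := by
  induction n with
  | zero => simp [kabs_one]
  | succ n ih => rw [pow_succ, kabs_mul, ih, pow_succ]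

lemma kabs_monomial {c : Fq} (h : c ≠ 0) (n : ℕ) :
    kabs Fq (polyToK Fq (Polynomial.monomial n c)) = qc Fq ^ n := by
  rw [polyToK, Polynomial.coe_eval₂RingHom, Polynomial.eval₂_monomial, kabs_mul, kabs_pow,
    kabs_TT, kabs_C h, one_mul]

lemma kabs_poly (p : Polynomial Fq) (h : p ≠ 0) :
    kabs Fq (polyToK Fq p) = qc Fq ^ p.natDegree := by
  induction hn : p.natDegree using Nat.strong_induction_on generalizing p with
  | _ n ih =>
    have hl : p.leadingCoeff ≠ 0 := Polynomial.leadingCoeff_ne_zero.2 h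
    have e : polyToK Fq p = polyToK Fq (Polynomial.monomial n p.leadingCoeff)
        + polyToK Fq p.eraseLead := by
      rw [← map_add, ← hn, add_comm, Polynomial.eraseLead_add_monomial_natDegree_leadingCoeff]
    by_cases h0 : p.eraseLead = 0
    · rw [e, h0, map_zero, add_zero, kabs_monomial hl]
    · have hlt : p.eraseLead.natDegree < n := by
        by_contra hc
        have h1 := Polynomial.eraseLead_natDegree_lt_or_eraseLead_eq_zero p
        rcases h1 with h1 | h1
        · omega
        · exact h0 h1
      rw [e, kabs_add_eq, kabs_monomial hl]
      rw [ih _ hlt _ h0 rfl, kabs_monomial hl]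
      exact pow_lt_pow_right₀ qc_gt hlt

lemma kabs_poly_le (p : Polynomial Fq) {n : ℕ} (h : p.natDegree ≤ n) :
    kabs Fq (polyToK Fq p) ≤ qc Fq ^ n := by
  by_cases h0 : p = 0
  · rw [h0, map_zero, kabs_zero]; exact pow_nonneg qc_pos.le _
  · rw [kabs_poly p h0]; exact pow_le_pow_right₀ qc_gt.le h

lemma one_le_kabs_poly (p : Polynomial Fq) (h : p ≠ 0) : 1 ≤ kabs Fq (polyToK Fq p) := by
  rw [kabs_poly p h]; exact one_le_pow₀ qc_gt.le

lemma polyToK_ne {p : Polynomial Fq} (h : p ≠ 0) : polyToK Fq p ≠ 0 := by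
  rw [← kabs_pos_iff]; exact one_pos.trans_le (one_le_kabs_poly p h)

lemma Hpoly_bdd (P : Polynomial (Polynomial Fq)) :
    BddAbove (Set.range fun i : ℕ => kabs Fq (polyToK Fq (P.coeff i))) := by
  refine ⟨qc Fq ^ (P.support.sup fun i => (P.coeff i).natDegree), ?_⟩
  rintro _ ⟨i, rfl⟩
  apply kabs_poly_le
  by_cases hi : P.coeff i = 0
  · simp [hi]
  · exact Finset.le_sup (f := fun i => (P.coeff i).natDegree) (Polynomial.mem_support_iff.2 hi)

lemma coeff_le_H (P : Polynomial (Polynomial Fq)) (i : ℕ) :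
    kabs Fq (polyToK Fq (P.coeff i)) ≤ Hpoly Fq P := le_ciSup (Hpoly_bdd P) i

lemma H_le (P : Polynomial (Polynomial Fq)) {c : ℝ}
    (h : ∀ i, kabs Fq (polyToK Fq (P.coeff i)) ≤ c) : Hpoly Fq P ≤ c := ciSup_le h

lemma H_eq (P : Polynomial (Polynomial Fq)) (hP : P ≠ 0) :
    ∃ h : ℕ, Hpoly Fq P = qc Fq ^ h ∧ ∀ i, (P.coeff i).natDegree ≤ h := by
  have hne : P.support.Nonempty := Polynomial.support_nonempty.2 hP
  obtain ⟨i, hi, hm⟩ := Finset.exists_max_image P.support (fun i => (P.coeff i).natDegree) hne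
  have hall : ∀ j, (P.coeff j).natDegree ≤ (P.coeff i).natDegree := by
    intro j
    by_cases hj : P.coeff j = 0
    · simp [hj]
    · exact hm j (Polynomial.mem_support_iff.2 hj)
  refine ⟨(P.coeff i).natDegree, le_antisymm ?_ ?_, hall⟩
  · exact H_le P fun j => kabs_poly_le _ (hall j)
  · rw [← kabs_poly _ (Polynomial.mem_support_iff.1 hi)]; exact coeff_le_H P i

lemma finite_polys {R : Type*} [Semiring R] (S : Set R) (hS : S.Finite) (n : ℕ) :
    {P : Polynomial R | P.natDegree ≤ n ∧ ∀ i, P.coeff i ∈ S}.Finite := by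
  have hf : (Set.pi Set.univ fun _ : Fin (n+1) => S).Finite := Set.Finite.pi fun _ => hS
  refine Set.Finite.of_injOn (f := fun P : Polynomial R => fun i : Fin (n+1) => P.coeff i)
    ?_ ?_ hf
  · intro P hP i _
    exact hP.2 i
  · intro P hP Q hQ h
    ext i
    by_cases hi : i < n + 1
    · exact congrFun h ⟨i, hi⟩
    · rw [Polynomial.coeff_eq_zero_of_natDegree_lt (by have := hP.1; omega),
        Polynomial.coeff_eq_zero_of_natDegree_lt (by have := hQ.1; omega)]

lemma finite_heights (n N : ℕ) :
    {P : Polynomial (Polynomial Fq) | P.natDegree ≤ n ∧ ∀ i, (P.coeff i).natDegree ≤ N}.Finite := by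
  have h1 := finite_polys (Set.univ : Set Fq) Set.finite_univ N
  refine (finite_polys _ h1 n).subset ?_
  rintro P ⟨h2, h3⟩
  exact ⟨h2, fun i => ⟨h3 i, fun _ => trivial⟩⟩

/-- A Liouville type lower bound gives a finite exponent. -/
lemma wExp_ne_top (n : ℕ) (ξ : K Fq) (C D : ℕ)
    (hb : ∀ (P : Polynomial (Polynomial Fq)) (h : ℕ), P.natDegree ≤ n → evalK Fq P ξ ≠ 0 →
      (∀ i, (P.coeff i).natDegree ≤ h) →
      qc Fq ^ (-((C : ℤ) + D * h)) ≤ kabs Fq (evalK Fq P ξ)) :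
    wExp Fq n ξ ≠ ⊤ := by
  have hle : wExp Fq n ξ ≤ ((D + 1 : ℝ) : EReal) := by
    apply sSup_le
    rintro x ⟨w, rfl, hw⟩
    rw [EReal.coe_le_coe_iff]
    by_contra hlt
    push Not at hlt
    apply hw
    refine (finite_heights n C).subset ?_
    rintro P ⟨h1, h2, h3⟩
    have hne : evalK Fq P ξ ≠ 0 := kabs_pos_iff.1 h2
    have hP : P ≠ 0 := by
      rintro rfl; exact hne (by simp [evalK])
    obtain ⟨h, hH, hc⟩ := H_eq P hP
    have h4 := (hb P h h1 hne hc).trans h3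
    refine ⟨h1, fun i => (hc i).trans ?_⟩
    rw [hH, ← Real.rpow_natCast, ← Real.rpow_mul qc_pos.le, ← Real.rpow_intCast,
      Real.rpow_le_rpow_left_iff qc_gt] at h4
    push_cast at h4
    have h5 : (h : ℝ) ≤ C := by nlinarith [(Nat.cast_nonneg h : (0:ℝ) ≤ h)]
    exact_mod_cast h5
  exact ne_top_of_le_ne_top (EReal.coe_ne_top _) hle

/-- Partial sums of the degrees of the partial quotients. -/
def Sd (b : ℕ → Polynomial Fq) (n : ℕ) : ℕ := ∑ i ∈ Finset.range n, (b i).natDegree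

lemma Sd_succ (b : ℕ → Polynomial Fq) (n : ℕ) : Sd b (n+1) = Sd b n + (b n).natDegree :=
  Finset.sum_range_succ _ _

lemma Sd_zero (b : ℕ → Polynomial Fq) : Sd b 0 = 0 := rfl

lemma Sd_le (b : ℕ → Polynomial Fq) (B : ℕ) (hB : ∀ n, (b n).natDegree ≤ B) (n : ℕ) :
    Sd b n ≤ B * n := by
  induction n with
  | zero => simp [Sd_zero]
  | succ n ih => rw [Sd_succ, Nat.mul_succ]; exact add_le_add ih (hB n)

lemma le_Sd (b : ℕ → Polynomial Fq) (hdeg : ∀ n, 1 ≤ (b n).natDegree) (n : ℕ) : n ≤ Sd b n := by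
  induction n with
  | zero => simp
  | succ n ih => rw [Sd_succ]; exact add_le_add ih (hdeg n)

lemma cfA_succ (b : ℕ → Polynomial Fq) (n : ℕ) : cfA Fq b (n+1) = b n := by simp [cfA]

lemma qSeq_rec (b : ℕ → Polynomial Fq) (n : ℕ) : qSeq Fq (cfA Fq b) (n+2) =
    b n * qSeq Fq (cfA Fq b) (n+1) + qSeq Fq (cfA Fq b) n := by
  rw [qSeq, cfA_succ]

lemma pSeq_rec (b : ℕ → Polynomial Fq) (n : ℕ) : pSeq Fq (cfA Fq b) (n+2) =
    b n * pSeq Fq (cfA Fq b) (n+1) + pSeq Fq (cfA Fq b) n := by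
  rw [pSeq, cfA_succ]

lemma kabs_b (b : ℕ → Polynomial Fq) (hdeg : ∀ n, 1 ≤ (b n).natDegree) (n : ℕ) :
    kabs Fq (polyToK Fq (b n)) = qc Fq ^ (b n).natDegree := by
  apply kabs_poly
  intro h
  have := hdeg n
  rw [h] at this; simp at this

lemma kabs_q (b : ℕ → Polynomial Fq) (hdeg : ∀ n, 1 ≤ (b n).natDegree) (n : ℕ) :
    kabs Fq (polyToK Fq (qSeq Fq (cfA Fq b) (n+1))) = qc Fq ^ Sd b n ∧
    kabs Fq (polyToK Fq (qSeq Fq (cfA Fq b) n)) ≤ qc Fq ^ Sd b n := by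
  induction n with
  | zero => simp [qSeq, Sd_zero, kabs_one, kabs_zero]
  | succ n ih =>
    have hd := hdeg n
    constructor
    · have e : kabs Fq (polyToK Fq (b n) * polyToK Fq (qSeq Fq (cfA Fq b) (n+1))) =
          qc Fq ^ Sd b (n+1) := by
        rw [kabs_mul, kabs_b b hdeg, ih.1, Sd_succ, pow_add, mul_comm]
      rw [qSeq_rec, map_add, map_mul, kabs_add_eq, e]
      rw [e]
      refine ih.2.trans_lt (pow_lt_pow_right₀ qc_gt ?_)
      rw [Sd_succ]; omega
    · rw [ih.1]
      refine pow_le_pow_right₀ qc_gt.le ?_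
      rw [Sd_succ]; omega

lemma deg_q (b : ℕ → Polynomial Fq) (n : ℕ) :
    (qSeq Fq (cfA Fq b) (n+1)).natDegree ≤ Sd b n ∧
    (qSeq Fq (cfA Fq b) n).natDegree ≤ Sd b n := by
  induction n with
  | zero => simp [qSeq]
  | succ n ih =>
    constructor
    · rw [qSeq_rec, Sd_succ]
      refine Polynomial.natDegree_add_le_of_degree_le ?_ (ih.2.trans (by omega))
      exact (Polynomial.natDegree_mul_le_of_le le_rfl ih.1).trans (by omega)
    · refine ih.1.trans ?_
      rw [Sd_succ]; omega

lemma deg_p (b : ℕ → Polynomial Fq) (n : ℕ) :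
    (pSeq Fq (cfA Fq b) (n+1)).natDegree ≤ Sd b n ∧
    (pSeq Fq (cfA Fq b) n).natDegree ≤ Sd b n := by
  induction n with
  | zero => simp [pSeq, cfA]
  | succ n ih =>
    constructor
    · rw [pSeq_rec, Sd_succ]
      refine Polynomial.natDegree_add_le_of_degree_le ?_ (ih.2.trans (by omega))
      exact (Polynomial.natDegree_mul_le_of_le le_rfl ih.1).trans (by omega)
    · refine ih.1.trans ?_
      rw [Sd_succ]; omega

/-- The error `q_{n-1} ξ - p_{n-1}`. -/
def Er (b : ℕ → Polynomial Fq) (ξ : K Fq) (n : ℕ) : K Fq :=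
  polyToK Fq (qSeq Fq (cfA Fq b) n) * ξ - polyToK Fq (pSeq Fq (cfA Fq b) n)

lemma Er_rec (b : ℕ → Polynomial Fq) (ξ : K Fq) (n : ℕ) :
    Er b ξ (n+2) = polyToK Fq (b n) * Er b ξ (n+1) + Er b ξ n := by
  unfold Er
  rw [qSeq_rec, pSeq_rec]
  simp only [map_add, map_mul]
  ring

lemma kabs_Er (b : ℕ → Polynomial Fq) (hdeg : ∀ n, 1 ≤ (b n).natDegree)
    (ξ : K Fq) (hξ : IsCFOf Fq ξ (cfA Fq b)) (n : ℕ) :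
    kabs Fq (Er b ξ n) = qc Fq ^ (-(Sd b n : ℤ)) := by
  cases n with
  | zero => simp [Er, qSeq, pSeq, kabs_neg, kabs_one, Sd_zero]
  | succ n =>
    have h := hξ.2 n
    have hq := (kabs_q b hdeg n).1
    have hne : polyToK Fq (qSeq Fq (cfA Fq b) (n+1)) ≠ 0 := by
      rw [← kabs_pos_iff, hq]; exact pow_pos qc_pos _
    have e : Er b ξ (n+1) = polyToK Fq (qSeq Fq (cfA Fq b) (n+1)) *
      (ξ - polyToK Fq (pSeq Fq (cfA Fq b) (n+1)) / polyToK Fq (qSeq Fq (cfA Fq b) (n+1))) := by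
      unfold Er; field_simp
    rw [e, kabs_mul, h, (kabs_q b hdeg (n+1)).1, hq, zpow_neg, zpow_natCast]
    have h1 : qc Fq ^ Sd b n ≠ 0 := (pow_pos qc_pos _).ne'
    field_simp

lemma Er_ne (b : ℕ → Polynomial Fq) (hdeg : ∀ n, 1 ≤ (b n).natDegree)
    (ξ : K Fq) (hξ : IsCFOf Fq ξ (cfA Fq b)) (n : ℕ) : Er b ξ n ≠ 0 := by
  rw [← kabs_pos_iff, kabs_Er b hdeg ξ hξ]; exact zpow_pos qc_pos _

/-- The complete quotients. -/
def Zq (b : ℕ → Polynomial Fq) (ξ : K Fq) (n : ℕ) : K Fq := - Er b ξ n / Er b ξ (n+1)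

lemma Zq_rec (b : ℕ → Polynomial Fq) (hdeg : ∀ n, 1 ≤ (b n).natDegree)
    (ξ : K Fq) (hξ : IsCFOf Fq ξ (cfA Fq b)) (n : ℕ) :
    Zq b ξ n = polyToK Fq (b n) + 1 / Zq b ξ (n+1) := by
  have h1 := Er_ne b hdeg ξ hξ (n+1)
  have h2 := Er_ne b hdeg ξ hξ (n+2)
  unfold Zq
  rw [show n + 1 + 1 = n + 2 from rfl]
  have h3 := Er_rec b ξ n
  have h4 : Er b ξ n = Er b ξ (n+2) - polyToK Fq (b n) * Er b ξ (n+1) := by rw [h3]; ring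
  rw [h4]
  field_simp
  ring

lemma kabs_Zq (b : ℕ → Polynomial Fq) (hdeg : ∀ n, 1 ≤ (b n).natDegree)
    (ξ : K Fq) (hξ : IsCFOf Fq ξ (cfA Fq b)) (n : ℕ) :
    kabs Fq (Zq b ξ n) = qc Fq ^ (b n).natDegree := by
  unfold Zq
  rw [kabs_div _ _ (Er_ne b hdeg ξ hξ _), kabs_neg, kabs_Er b hdeg ξ hξ, kabs_Er b hdeg ξ hξ,
    ← zpow_sub₀ qc_pos.ne', ← zpow_natCast, Sd_succ]
  congr 1; push_cast; ring

lemma Zq_ne (b : ℕ → Polynomial Fq) (hdeg : ∀ n, 1 ≤ (b n).natDegree)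
    (ξ : K Fq) (hξ : IsCFOf Fq ξ (cfA Fq b)) (n : ℕ) : Zq b ξ n ≠ 0 := by
  rw [← kabs_pos_iff, kabs_Zq b hdeg ξ hξ]; exact pow_pos qc_pos _

lemma Zq_diff (b : ℕ → Polynomial Fq) (hdeg : ∀ n, 1 ≤ (b n).natDegree)
    (ξ : K Fq) (hξ : IsCFOf Fq ξ (cfA Fq b)) (i j : ℕ) (h : b i = b j) :
    kabs Fq (Zq b ξ i - Zq b ξ j) = kabs Fq (Zq b ξ (i+1) - Zq b ξ (j+1)) *
      qc Fq ^ (-(((b (i+1)).natDegree : ℤ) + (b (j+1)).natDegree)) := by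
  have h1 := Zq_ne b hdeg ξ hξ (i+1)
  have h2 := Zq_ne b hdeg ξ hξ (j+1)
  have e : Zq b ξ i - Zq b ξ j =
      - (Zq b ξ (i+1) - Zq b ξ (j+1)) / (Zq b ξ (i+1) * Zq b ξ (j+1)) := by
    rw [Zq_rec b hdeg ξ hξ i, Zq_rec b hdeg ξ hξ j, h]
    field_simp
    ring
  rw [e, kabs_div _ _ (mul_ne_zero h1 h2), kabs_neg, kabs_mul, kabs_Zq b hdeg ξ hξ,
    kabs_Zq b hdeg ξ hξ, zpow_neg, zpow_add₀ qc_pos.ne', zpow_natCast, zpow_natCast]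
  rfl

lemma Zq_upper (b : ℕ → Polynomial Fq) (hdeg : ∀ n, 1 ≤ (b n).natDegree)
    (B : ℕ) (hB : ∀ n, (b n).natDegree ≤ B)
    (ξ : K Fq) (hξ : IsCFOf Fq ξ (cfA Fq b)) (m : ℕ) : ∀ i j : ℕ,
    (∀ k < m, b (i+k) = b (j+k)) →
    kabs Fq (Zq b ξ i - Zq b ξ j) ≤ qc Fq ^ ((B : ℤ) - 2 * m) := by
  induction m with
  | zero =>
    intro i j _
    refine (kabs_sub_le _ _).trans ?_
    rw [kabs_Zq b hdeg ξ hξ, kabs_Zq b hdeg ξ hξ, show ((B : ℤ) - 2 * (0 : ℕ)) = B by simp,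
      zpow_natCast]
    exact max_le (pow_le_pow_right₀ qc_gt.le (hB _)) (pow_le_pow_right₀ qc_gt.le (hB _))
  | succ m ih =>
    intro i j h
    rw [Zq_diff b hdeg ξ hξ i j (h 0 (by omega))]
    have h1 := ih (i+1) (j+1) (fun k hk => by
      have := h (k+1) (by omega)
      rwa [add_right_comm i, add_right_comm j, add_assoc i, add_assoc j])
    have h2 : qc Fq ^ (-(((b (i+1)).natDegree : ℤ) + (b (j+1)).natDegree)) ≤ qc Fq ^ (-2 : ℤ) := by
      refine zpow_le_zpow_right₀ qc_gt.le ?_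
      have := hdeg (i+1); have := hdeg (j+1); omega
    refine (mul_le_mul h1 h2 (zpow_pos qc_pos _).le (zpow_pos qc_pos _).le).trans ?_
    rw [← zpow_add₀ qc_pos.ne']
    apply le_of_eq; congr 1; push_cast; ring

lemma Zq_lower (b : ℕ → Polynomial Fq) (hdeg : ∀ n, 1 ≤ (b n).natDegree)
    (B : ℕ) (hB : ∀ n, (b n).natDegree ≤ B)
    (ξ : K Fq) (hξ : IsCFOf Fq ξ (cfA Fq b)) (m : ℕ) : ∀ i j : ℕ,
    (∀ k < m, b (i+k) = b (j+k)) → b (i+m) ≠ b (j+m) →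
    qc Fq ^ (-(2 * B * m : ℤ)) ≤ kabs Fq (Zq b ξ i - Zq b ξ j) := by
  induction m with
  | zero =>
    intro i j _ h
    have h1 := Zq_ne b hdeg ξ hξ (i+1)
    have h2 := Zq_ne b hdeg ξ hξ (j+1)
    have hlt : ∀ n, kabs Fq (1 / Zq b ξ n) < 1 := by
      intro n
      rw [kabs_div _ _ (Zq_ne b hdeg ξ hξ n), kabs_one, kabs_Zq b hdeg ξ hξ, div_lt_one (pow_pos qc_pos _)]
      exact one_lt_pow₀ qc_gt (by have := hdeg n; omega)
    have e : Zq b ξ i - Zq b ξ j =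
      polyToK Fq (b i - b j) + (1 / Zq b ξ (i+1) - 1 / Zq b ξ (j+1)) := by
      rw [Zq_rec b hdeg ξ hξ i, Zq_rec b hdeg ξ hξ j, map_sub]; ring
    have h3 := one_le_kabs_poly (b i - b j) (sub_ne_zero.2 h)
    rw [e, kabs_add_eq]
    · simpa using h3
    · exact ((kabs_sub_le _ _).trans_lt (max_lt (hlt _) (hlt _))).trans_le h3
  | succ m ih =>
    intro i j h h'
    rw [Zq_diff b hdeg ξ hξ i j (h 0 (by omega))]
    have h1 := ih (i+1) (j+1) (fun k hk => by
      have := h (k+1) (by omega)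
      rwa [add_right_comm i, add_right_comm j, add_assoc i, add_assoc j])
      (by rwa [add_right_comm i, add_right_comm j, add_assoc i, add_assoc j])
    have h2 : qc Fq ^ (-(2 * B : ℤ)) ≤ qc Fq ^ (-(((b (i+1)).natDegree : ℤ) + (b (j+1)).natDegree)) := by
      refine zpow_le_zpow_right₀ qc_gt.le ?_
      have := hB (i+1); have := hB (j+1); omega
    refine le_trans ?_ (mul_le_mul h1 h2 (zpow_pos qc_pos _).le (kabs_nonneg _))
    rw [← zpow_add₀ qc_pos.ne']
    apply le_of_eq; congr 1; push_cast; ring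

/-- Bounded partial quotients: linear forms are not too small. -/
lemma bad_approx (b : ℕ → Polynomial Fq) (hdeg : ∀ n, 1 ≤ (b n).natDegree)
    (B : ℕ) (hB : ∀ n, (b n).natDegree ≤ B)
    (ξ : K Fq) (hξ : IsCFOf Fq ξ (cfA Fq b)) (u v : Polynomial Fq) (huv : u ≠ 0 ∨ v ≠ 0)
    (t : ℕ) (hu : u.natDegree ≤ t) :
    qc Fq ^ (-((t : ℤ) + 3 * B)) ≤ kabs Fq (polyToK Fq u * ξ + polyToK Fq v) := by
  by_cases hu0 : u = 0
  · have hv : v ≠ 0 := by tauto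
    rw [hu0, map_zero, zero_mul, zero_add]
    refine le_trans ?_ (one_le_kabs_poly v hv)
    exact zpow_le_one_of_nonpos₀ qc_gt.le (by omega)
  have hex : ∃ n, u.natDegree < Sd b n := ⟨u.natDegree + 1, le_Sd b hdeg _⟩
  classical
  obtain ⟨n, hn, hmin⟩ : ∃ n, u.natDegree < Sd b (n+1) ∧ Sd b n ≤ u.natDegree := by
    have h1 := Nat.find_spec hex
    have h2 : Nat.find hex ≠ 0 := by
      intro h; rw [h, Sd_zero] at h1; omega
    obtain ⟨n, hn⟩ := Nat.exists_eq_succ_of_ne_zero h2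
    refine ⟨n, by rw [hn] at h1; exact h1, ?_⟩
    have := Nat.find_min hex (m := n) (by omega)
    omega
  have s1 : Sd b (n+1) ≤ u.natDegree + B := by rw [Sd_succ]; have := hB n; omega
  have s2 : Sd b (n+2) ≤ u.natDegree + 2 * B := by rw [Sd_succ]; have := hB (n+1); omega
  have s3 : Sd b (n+1) ≤ Sd b (n+2) := by rw [Sd_succ b (n+1)]; omega
  by_contra hlt
  push Not at hlt
  set q := qSeq Fq (cfA Fq b) (n+2) with hq
  set p := pSeq Fq (cfA Fq b) (n+2) with hp
  have kq : kabs Fq (polyToK Fq q) = qc Fq ^ Sd b (n+1) := (kabs_q b hdeg (n+1)).1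
  have kE := kabs_Er b hdeg ξ hξ (n+2)
  have ku := kabs_poly u hu0
  have e : polyToK Fq (u * p + v * q) =
      polyToK Fq q * (polyToK Fq u * ξ + polyToK Fq v) - polyToK Fq u * Er b ξ (n+2) := by
    unfold Er
    simp only [map_add, map_mul]
    ring
  have kuE : kabs Fq (polyToK Fq u * Er b ξ (n+2)) =
      qc Fq ^ ((u.natDegree : ℤ) - Sd b (n+2)) := by
    rw [kabs_mul, ku, kE, ← zpow_natCast, ← zpow_add₀ qc_pos.ne']; rfl
  have c1 : kabs Fq (polyToK Fq q * (polyToK Fq u * ξ + polyToK Fq v)) < 1 := by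
    rw [kabs_mul, kq]
    refine (mul_lt_mul_of_pos_left hlt (pow_pos qc_pos _)).trans_le ?_
    rw [← zpow_natCast, ← zpow_add₀ qc_pos.ne']
    exact zpow_le_one_of_nonpos₀ qc_gt.le (by omega)
  have c2 : kabs Fq (polyToK Fq u * Er b ξ (n+2)) < 1 := by
    rw [kuE]
    exact zpow_lt_one_of_neg₀ qc_gt (by omega)
  have hz : u * p + v * q = 0 := by
    by_contra h
    have := one_le_kabs_poly _ h
    rw [e] at this
    exact absurd ((kabs_sub_le _ _).trans_lt (max_lt c1 c2)) (not_lt.2 this)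
  rw [hz, map_zero] at e
  have e2 : polyToK Fq q * (polyToK Fq u * ξ + polyToK Fq v) = polyToK Fq u * Er b ξ (n+2) :=
    (sub_eq_zero.1 e.symm)
  have e3 := congrArg (kabs Fq) e2
  rw [kuE, kabs_mul, kq] at e3
  have : qc Fq ^ ((u.natDegree : ℤ) - Sd b (n+2)) < qc Fq ^ ((u.natDegree : ℤ) - Sd b (n+2)) := by
    conv_lhs => rw [← e3]
    refine (mul_lt_mul_of_pos_left hlt (pow_pos qc_pos _)).trans_le ?_
    rw [← zpow_natCast, ← zpow_add₀ qc_pos.ne']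
    exact zpow_le_zpow_right₀ qc_gt.le (by omega)
  exact lt_irrefl _ this

/-- The polynomial `A X^2 + B X + C`. -/
def quad (A B C : Polynomial Fq) : Polynomial (Polynomial Fq) :=
  Polynomial.C A * Polynomial.X ^ 2 + Polynomial.C B * Polynomial.X + Polynomial.C C

lemma quad_natDegree (A B C : Polynomial Fq) : (quad A B C).natDegree ≤ 2 :=
  Polynomial.natDegree_quadratic_le

lemma eval_quad (A B C : Polynomial Fq) (ξ : K Fq) : evalK Fq (quad A B C) ξ =
    polyToK Fq A * ξ ^ 2 + polyToK Fq B * ξ + polyToK Fq C := by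
  simp [evalK, quad]

lemma eq_quad (P : Polynomial (Polynomial Fq)) (h : P.natDegree ≤ 2) :
    P = quad (P.coeff 2) (P.coeff 1) (P.coeff 0) := by
  ext1 n
  by_cases hn : n ≤ 2
  · interval_cases n <;> simp [quad, Polynomial.coeff_X, Polynomial.coeff_C]
  · rw [Polynomial.coeff_eq_zero_of_natDegree_lt (by omega),
      Polynomial.coeff_eq_zero_of_natDegree_lt]
    have := quad_natDegree (P.coeff 2) (P.coeff 1) (P.coeff 0); omega

lemma quad_coeff_natDegree (A B C : Polynomial Fq) (h : ℕ) (hA : A.natDegree ≤ h)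
    (hB : B.natDegree ≤ h) (hC : C.natDegree ≤ h) (n : ℕ) :
    ((quad A B C).coeff n).natDegree ≤ h := by
  by_cases hn : n ≤ 2
  · interval_cases n <;> simpa [quad, Polynomial.coeff_X, Polynomial.coeff_C]
  · rw [Polynomial.coeff_eq_zero_of_natDegree_lt]
    · simp
    · have := quad_natDegree A B C; omega

/-- The quadratic form attached to the coincidence of the tails at `i` and `j`. -/
lemma exists_quad (b : ℕ → Polynomial Fq) (hdeg : ∀ n, 1 ≤ (b n).natDegree)
    (ξ : K Fq) (hξ : IsCFOf Fq ξ (cfA Fq b)) (i j : ℕ) :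
    ∃ A B C : Polynomial Fq, A.natDegree ≤ Sd b i + Sd b j ∧ B.natDegree ≤ Sd b i + Sd b j ∧
      C.natDegree ≤ Sd b i + Sd b j ∧
      kabs Fq (polyToK Fq A * ξ ^ 2 + polyToK Fq B * ξ + polyToK Fq C) =
      qc Fq ^ (-((Sd b (i+1) : ℤ) + Sd b (j+1))) * kabs Fq (Zq b ξ i - Zq b ξ j) := by
  set q := qSeq Fq (cfA Fq b) with hq
  set p := pSeq Fq (cfA Fq b) with hp
  have qi := deg_q b i
  have qj := deg_q b j
  have pi := deg_p b i
  have pj := deg_p b j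
  rw [← hq] at qi qj
  rw [← hp] at pi pj
  refine ⟨q i * q (j+1) - q (i+1) * q j,
    (q (i+1) * p j + p (i+1) * q j) - (q i * p (j+1) + p i * q (j+1)),
    p i * p (j+1) - p (i+1) * p j, ?_, ?_, ?_, ?_⟩
  · exact Polynomial.natDegree_sub_le_of_le (Polynomial.natDegree_mul_le_of_le qi.2 qj.1)
      (Polynomial.natDegree_mul_le_of_le qi.1 qj.2) |>.trans (by simp)
  · refine (Polynomial.natDegree_sub_le_of_le
      (Polynomial.natDegree_add_le_of_degree_le
        (Polynomial.natDegree_mul_le_of_le qi.1 pj.2) (Polynomial.natDegree_mul_le_of_le pi.1 qj.2))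
      (Polynomial.natDegree_add_le_of_degree_le
        (Polynomial.natDegree_mul_le_of_le qi.2 pj.1)
        (Polynomial.natDegree_mul_le_of_le pi.2 qj.1))).trans (by simp)
  · exact Polynomial.natDegree_sub_le_of_le (Polynomial.natDegree_mul_le_of_le pi.2 pj.1)
      (Polynomial.natDegree_mul_le_of_le pi.1 pj.2) |>.trans (by simp)
  · have h1 := Er_ne b hdeg ξ hξ (i+1)
    have h2 := Er_ne b hdeg ξ hξ (j+1)
    have e1 : Er b ξ i * Er b ξ (j+1) - Er b ξ (i+1) * Er b ξ j =
        - (Er b ξ (i+1) * Er b ξ (j+1)) * (Zq b ξ i - Zq b ξ j) := by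
      unfold Zq; field_simp; ring
    have e2 : polyToK Fq (q i * q (j+1) - q (i+1) * q j) * ξ ^ 2 +
      polyToK Fq ((q (i+1) * p j + p (i+1) * q j) - (q i * p (j+1) + p i * q (j+1))) * ξ +
      polyToK Fq (p i * p (j+1) - p (i+1) * p j) =
      Er b ξ i * Er b ξ (j+1) - Er b ξ (i+1) * Er b ξ j := by
      unfold Er
      simp only [map_add, map_mul, map_sub]
      ring
    rw [e2, e1, kabs_mul, kabs_neg, kabs_mul, kabs_Er b hdeg ξ hξ, kabs_Er b hdeg ξ hξ,
      ← zpow_add₀ qc_pos.ne']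
    congr 2; ring

/-- The key Liouville-type inequality. -/
lemma w2_bound (b : ℕ → Polynomial Fq) (hdeg : ∀ n, 1 ≤ (b n).natDegree)
    (B : ℕ) (hB : ∀ n, (b n).natDegree ≤ B)
    (ξ : K Fq) (hξ : IsCFOf Fq ξ (cfA Fq b)) (κ ρ n₀ : ℕ)
    (hw : ∀ n ≥ n₀, ∃ i j m : ℕ, i < j ∧ j ≤ κ * n ∧ n ≤ m ∧ m ≤ ρ * j ∧
      (∀ k < m, b (i+k) = b (j+k)) ∧ b (i+m) ≠ b (j+m)) :
    ∃ C D : ℕ, ∀ (P : Polynomial (Polynomial Fq)) (h : ℕ), P.natDegree ≤ 2 → evalK Fq P ξ ≠ 0 →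
      (∀ i, (P.coeff i).natDegree ≤ h) →
      qc Fq ^ (-((C : ℤ) + D * h)) ≤ kabs Fq (evalK Fq P ξ) := by
  -- constants
  set M : ℕ := 4 * B * κ + 2 * B * ρ * κ with hM
  refine ⟨5 * B + M * (n₀ + 2 * B + 1), M + 1, ?_⟩
  intro P h hP hne hc
  rw [eq_quad P hP, eval_quad] at hne ⊢
  set A₁ := P.coeff 2
  set A₂ := P.coeff 1
  set A₃ := P.coeff 0
  have d₁ : A₁.natDegree ≤ h := hc 2
  have d₂ : A₂.natDegree ≤ h := hc 1
  have d₃ : A₃.natDegree ≤ h := hc 0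
  by_cases hA : A₁ = 0
  · rw [hA, map_zero, zero_mul, zero_add] at hne ⊢
    have huv : A₂ ≠ 0 ∨ A₃ ≠ 0 := by
      by_contra hh
      push Not at hh
      rw [hh.1, hh.2] at hne
      simp at hne
    refine le_trans (zpow_le_zpow_right₀ qc_gt.le ?_)
      (bad_approx b hdeg B hB ξ hξ A₂ A₃ huv h d₂)
    push_cast
    have : (0:ℤ) ≤ M * (n₀ + 2 * B + 1) := by positivity
    have : (0:ℤ) ≤ M * h := by positivity
    linarith
  set n := n₀ + h + 2 * B + 1 with hn
  obtain ⟨i, j, m, hij, hj, hnm, hmj, hag, hdis⟩ := hw n (by omega)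
  obtain ⟨D₁, D₂, D₃, g₁, g₂, g₃, hk⟩ := exists_quad b hdeg ξ hξ i j
  set s := Sd b i + Sd b j with hs
  have hsn : s ≤ 2 * B * κ * n := by
    have h1 := Sd_le b B hB i
    have h2 := Sd_le b B hB j
    have h3 : B * i ≤ B * (κ * n) := Nat.mul_le_mul_left _ (by omega)
    have h4 : B * j ≤ B * (κ * n) := Nat.mul_le_mul_left _ (by omega)
    nlinarith
  have hmn : 2 * B * m ≤ 2 * B * ρ * κ * n := by
    have h1 : ρ * j ≤ ρ * (κ * n) := Nat.mul_le_mul_left _ hj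
    have h2 : 2 * B * m ≤ 2 * B * (ρ * (κ * n)) := Nat.mul_le_mul_left _ (hmj.trans h1)
    calc _ ≤ _ := h2
      _ = _ := by ring
  have hMn : M * n = M * (n₀ + 2 * B + 1) + M * h := by rw [hn]; ring
  have hMn' : M * n = 2 * (2 * B * κ * n) + 2 * B * ρ * κ * n := by rw [hM]; ring
  have hs1 : s + 2 ≤ Sd b (i+1) + Sd b (j+1) := by
    rw [Sd_succ, Sd_succ]; have := hdeg i; have := hdeg j; omega
  have hs2 : Sd b (i+1) + Sd b (j+1) ≤ s + 2 * B := by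
    rw [Sd_succ, Sd_succ]; have := hB i; have := hB j; omega
  have up := Zq_upper b hdeg B hB ξ hξ m i j hag
  have lo := Zq_lower b hdeg B hB ξ hξ m i j hag hdis
  set Qξ := polyToK Fq D₁ * ξ ^ 2 + polyToK Fq D₂ * ξ + polyToK Fq D₃ with hQ
  set Pξ := polyToK Fq A₁ * ξ ^ 2 + polyToK Fq A₂ * ξ + polyToK Fq A₃ with hPξ
  have kQlo : qc Fq ^ (-((s : ℤ) + 2 * B + 2 * B * m)) ≤ kabs Fq Qξ := by
    rw [hk]
    refine le_trans ?_ (mul_le_mul_of_nonneg_left lo (zpow_pos qc_pos _).le)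
    rw [← zpow_add₀ qc_pos.ne']
    exact zpow_le_zpow_right₀ qc_gt.le (by omega)
  have kQup : kabs Fq Qξ ≤ qc Fq ^ ((B : ℤ) - 2 * m - s) := by
    rw [hk]
    refine le_trans (mul_le_mul_of_nonneg_left up (zpow_pos qc_pos _).le) ?_
    rw [← zpow_add₀ qc_pos.ne']
    exact zpow_le_zpow_right₀ qc_gt.le (by omega)
  have kD : kabs Fq (polyToK Fq D₁) ≤ qc Fq ^ (s : ℤ) := by
    rw [zpow_natCast]; exact kabs_poly_le _ g₁
  have kA : kabs Fq (polyToK Fq A₁) ≤ qc Fq ^ (h : ℤ) := by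
    rw [zpow_natCast]; exact kabs_poly_le _ d₁
  -- lower bound for `D₁ P(ξ)` implies the result
  have fin : ∀ e : ℤ, 0 ≤ e → (e + s : ℤ) ≤ 5 * B + M * n + h →
      qc Fq ^ (-e) ≤ kabs Fq (polyToK Fq D₁ * Pξ) →
      qc Fq ^ (-(((5 * B + M * (n₀ + 2 * B + 1) : ℕ) : ℤ) + ((M + 1 : ℕ) : ℤ) * h))
        ≤ kabs Fq Pξ := by
    intro e he hes hle
    rw [kabs_mul] at hle
    have h1 := hle.trans (mul_le_mul_of_nonneg_right kD (kabs_nonneg _))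
    have h2 : qc Fq ^ (-(e + s)) ≤ kabs Fq Pξ := by
      have h3 : qc Fq ^ (-(e + s)) = qc Fq ^ (-(s:ℤ)) * qc Fq ^ (-e) := by
        rw [← zpow_add₀ qc_pos.ne']; congr 1; ring
      rw [h3]
      refine (mul_le_mul_of_nonneg_left h1 (zpow_pos qc_pos _).le).trans ?_
      rw [← mul_assoc, ← zpow_add₀ qc_pos.ne']; simp
    refine le_trans (zpow_le_zpow_right₀ qc_gt.le ?_) h2
    have : ((M * n : ℕ) : ℤ) = ((M * (n₀ + 2 * B + 1) + M * h : ℕ) : ℤ) := by rw [hMn]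
    push_cast at this ⊢
    linarith
  set u := A₁ * D₂ - A₂ * D₁ with hu
  set v := A₁ * D₃ - A₃ * D₁ with hv
  have lin : polyToK Fq u * ξ + polyToK Fq v =
      polyToK Fq A₁ * Qξ - polyToK Fq D₁ * Pξ := by
    rw [hu, hv, hQ, hPξ]
    simp only [map_mul, map_sub]
    ring
  have du : u.natDegree ≤ h + s :=
    (Polynomial.natDegree_sub_le_of_le (Polynomial.natDegree_mul_le_of_le d₁ g₂)
      (Polynomial.natDegree_mul_le_of_le d₂ g₁)).trans (by simp)
  have kAQ : kabs Fq (polyToK Fq A₁ * Qξ) ≤ qc Fq ^ ((h : ℤ) + (B - 2 * m - s)) := by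
    rw [kabs_mul, zpow_add₀ qc_pos.ne']
    exact mul_le_mul kA kQup (kabs_nonneg _) (zpow_pos qc_pos _).le
  by_cases huv : u ≠ 0 ∨ v ≠ 0
  · have ba := bad_approx b hdeg B hB ξ hξ u v huv (h + s) du
    rw [lin] at ba
    apply fin ((h + s : ℕ) + 3 * B) (by positivity)
    · have : ((M * n : ℕ) : ℤ) = ((2 * (2 * B * κ * n) + 2 * B * ρ * κ * n : ℕ) : ℤ) := by rw [hMn']
      have h5 : (s : ℤ) ≤ ((2 * B * κ * n : ℕ) : ℤ) := by exact_mod_cast hsn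
      have h6 : (0 : ℤ) ≤ ((2 * B * ρ * κ * n : ℕ) : ℤ) := by positivity
      push_cast at this h5 h6 ⊢
      linarith
    · have h1 := ba.trans (kabs_sub_le _ _)
      rcases le_max_iff.1 h1 with h2 | h2
      · exfalso
        have h3 := h2.trans kAQ
        rw [zpow_le_zpow_iff_right₀ qc_gt] at h3
        push_cast at h3
        omega
      · exact h2
  · push Not at huv
    rw [huv.1, huv.2, map_zero, zero_mul, add_zero, eq_comm, sub_eq_zero] at lin
    apply fin (s + 2 * B + 2 * B * m) (by positivity)
    · have : ((M * n : ℕ) : ℤ) = ((2 * (2 * B * κ * n) + 2 * B * ρ * κ * n : ℕ) : ℤ) := by rw [hMn']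
      have h5 : (s : ℤ) ≤ ((2 * B * κ * n : ℕ) : ℤ) := by exact_mod_cast hsn
      have h6 : ((2 * B * m : ℕ) : ℤ) ≤ ((2 * B * ρ * κ * n : ℕ) : ℤ) := by exact_mod_cast hmn
      push_cast at this h5 h6 ⊢
      linarith
    · rw [← lin, kabs_mul]
      refine kQlo.trans ?_
      exact le_mul_of_one_le_left (kabs_nonneg _) (one_le_kabs_poly _ hA)

lemma w1_bound (b : ℕ → Polynomial Fq) (hdeg : ∀ n, 1 ≤ (b n).natDegree)
    (B : ℕ) (hB : ∀ n, (b n).natDegree ≤ B)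
    (ξ : K Fq) (hξ : IsCFOf Fq ξ (cfA Fq b)) : wExp Fq 1 ξ ≠ ⊤ := by
  apply wExp_ne_top 1 ξ (3 * B) 1
  intro P h hP hne hc
  have hP2 : P.coeff 2 = 0 := Polynomial.coeff_eq_zero_of_natDegree_lt (by omega)
  rw [eq_quad P (by omega), eval_quad, hP2, map_zero, zero_mul, zero_add] at hne ⊢
  have huv : P.coeff 1 ≠ 0 ∨ P.coeff 0 ≠ 0 := by
    by_contra hh
    push Not at hh
    rw [hh.1, hh.2] at hne
    simp at hne
  refine le_trans (zpow_le_zpow_right₀ qc_gt.le ?_)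
    (bad_approx b hdeg B hB ξ hξ _ _ huv h (hc 1))
  push_cast
  linarith

lemma flatten_get {A : Type*} (V : List A) (n : ℕ) : ∀ i < n * V.length,
    (List.replicate n V).flatten[i]? = V[i % V.length]? := by
  induction n with
  | zero => intro i hi; simp at hi
  | succ n ih =>
    intro i hi
    rw [List.replicate_succ, List.flatten_cons]
    by_cases h : i < V.length
    · rw [List.getElem?_append_left h, Nat.mod_eq_of_lt h]
    · push Not at h
      rw [List.getElem?_append_right h, ih _ (by rw [Nat.succ_mul] at hi; omega),
        Nat.mod_eq_sub_mod h]

lemma flatten_len {A : Type*} (V : List A) (n : ℕ) :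
    (List.replicate n V).flatten.length = n * V.length := by
  simp

lemma wordPow_get {A : Type*} (V : List A) (w : ℝ) (i : ℕ) (hi : i < (wordPow V w).length) :
    (wordPow V w)[i]? = V[i % V.length]? := by
  unfold wordPow at hi ⊢
  by_cases h : i < ⌊w⌋₊ * V.length
  · rw [List.getElem?_append_left (by rwa [flatten_len]), flatten_get V _ i h]
  · push Not at h
    rw [List.length_append, flatten_len, List.length_take] at hi
    rw [List.getElem?_append_right (by rwa [flatten_len]), flatten_len, List.getElem?_take_of_lt
      (by omega)]
    congr 1
    obtain ⟨k, rfl⟩ := Nat.exists_eq_add_of_le h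
    rw [Nat.add_sub_cancel_left, Nat.mul_add_mod_self_right, Nat.mod_eq_of_lt (by omega)]

lemma wordPow_nat_len {A : Type*} (V : List A) (n : ℕ) :
    (wordPow V (n : ℝ)).length = n * V.length := by
  simp [wordPow]

lemma prefix_iff {A : Type*} (l : List A) (b : ℕ → A) :
    IsPrefixOfSeq l b ↔ ∀ i < l.length, l[i]? = some (b i) := by
  unfold IsPrefixOfSeq
  refine forall_congr' fun i => forall_congr' fun h => ?_
  rw [List.getElem?_eq_getElem h, Option.some_inj]; rfl

lemma of_cond {A : Type*} (b : ℕ → A) (ρ : ℝ) (hρ : 2 ≤ ρ) (h : SatisfiesCond b ρ) (N : ℕ) :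
    ∃ i j m : ℕ, i < j ∧ N ≤ m ∧ (ρ - 1) * j ≤ m ∧ ∀ k < m, b (i+k) = b (j+k) := by
  obtain ⟨U, V, w, h1, h2, h3, h4, h5⟩ := h
  have hl := h5.le_apply (x := 2 * N)
  have h4 := h4 (2 * N)
  have h3 := h3 (2 * N)
  have h1 := h1 (2 * N)
  generalize U (2 * N) = U at *
  generalize V (2 * N) = V at *
  generalize w (2 * N) = w at *
  have hs : 0 < V.length := List.length_pos_iff.2 h1
  set W := wordPow V w with hW
  push_cast at h4
  have h6 : 2 * (U.length + V.length) ≤ U.length + W.length := by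
    have : (2:ℝ) * (U.length + V.length) ≤ U.length + W.length := by
      refine le_trans ?_ h4
      exact mul_le_mul_of_nonneg_right hρ (by positivity)
    exact_mod_cast this
  refine ⟨U.length, U.length + V.length, W.length - V.length, by omega, by omega, ?_, ?_⟩
  · rw [Nat.cast_sub (by omega)]
    push_cast
    linarith
  · rw [prefix_iff] at h3
    have key : ∀ k < W.length, V[k % V.length]? = some (b (U.length + k)) := by
      intro k hk
      rw [← wordPow_get V w k hk, ← h3 (U.length + k) (by rw [List.length_append]; omega),
        List.getElem?_append_right (by omega), Nat.add_sub_cancel_left]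
    intro k hk
    have e1 := key k (by omega)
    have e2 := key (V.length + k) (by omega)
    rw [Nat.add_mod_left, e1, Option.some_inj] at e2
    rw [e2, add_assoc]

lemma to_cond {A : Type*} (b : ℕ → A) (ρ : ℕ)
    (h : ∀ N : ℕ, ∃ i j m : ℕ, i < j ∧ N ≤ m ∧ ρ * j ≤ m ∧ ∀ k < m, b (i+k) = b (j+k)) :
    SatisfiesCond b ρ := by
  have key : ∀ N : ℕ, ∃ (U V : List A) (w : ℝ), V ≠ [] ∧ 0 ≤ w ∧
      IsPrefixOfSeq (U ++ wordPow V w) b ∧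
      (ρ : ℝ) * ((U.length + V.length : ℕ) : ℝ) ≤ ((U.length + (wordPow V w).length : ℕ) : ℝ) ∧
      N ≤ (wordPow V w).length := by
    intro N
    obtain ⟨i, j, m, hij, hN, hρ, hag⟩ := h N
    obtain ⟨s, hs, rfl⟩ : ∃ s, 0 < s ∧ j = i + s := ⟨j - i, by omega, by omega⟩
    set V := (List.range s).map (fun k => b (i+k)) with hV
    set U := (List.range i).map b with hU
    have lV : V.length = s := by simp [hV]
    have lU : U.length = i := by simp [hU]
    set n := (s + m) / s with hn
    have lW : (wordPow V (n : ℝ)).length = n * s := by rw [wordPow_nat_len, lV]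
    have hn1 : n * s ≤ s + m := Nat.div_mul_le_self _ _
    have hn2 : s + m < n * s + s := by
      have h2 := Nat.div_add_mod (s + m) s
      have h3 := Nat.mod_lt (s + m) hs
      rw [← hn, mul_comm] at h2
      omega
    refine ⟨U, V, n, ?_, by positivity, ?_, ?_, ?_⟩
    · intro h0
      rw [h0] at lV; simp at lV; omega
    · rw [prefix_iff]
      intro t ht
      rw [List.length_append, lU, lW] at ht
      by_cases hti : t < i
      · rw [List.getElem?_append_left (by omega)]
        simp [hU, hti]
      · push Not at hti
        obtain ⟨k, rfl⟩ := Nat.exists_eq_add_of_le hti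
        have hk : k < n * s := by omega
        rw [List.getElem?_append_right (by omega), lU, Nat.add_sub_cancel_left,
          wordPow_get _ _ _ (by omega), lV]
        have hks : k % s < s := Nat.mod_lt _ hs
        have per : ∀ k < s + m, b (i + k % s) = b (i + k) := by
          intro k
          induction k using Nat.strong_induction_on with
          | _ k ih =>
            intro hk
            by_cases hlt : k < s
            · rw [Nat.mod_eq_of_lt hlt]
            · push Not at hlt
              rw [Nat.mod_eq_sub_mod hlt, ih (k - s) (by omega) (by omega), hag (k-s) (by omega)]
              congr 1; omega
        rw [← per k (by omega)]
        simp [hV, hks]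
    · rw [lU, lV, lW]
      have : ρ * (i + s) ≤ i + n * s := by omega
      exact_mod_cast this
    · rw [lW]; omega
  choose U V w a1 a2 a3 a4 a5 using key
  have ht : Tendsto (fun N => (wordPow (V N) (w N)).length) atTop atTop :=
    tendsto_atTop_mono a5 tendsto_id
  obtain ⟨f, -, hf⟩ := Filter.strictMono_subseq_of_tendsto_atTop ht
  exact ⟨fun n => U (f n), fun n => V (f n), fun n => w (f n), fun n => a1 _, fun n => a2 _,
    fun n => a3 _, fun n => a4 _, hf⟩

lemma dio_not_cond {A : Type*} (b : ℕ → A) (h : dioExp b ≠ ⊤) :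
    ∃ ρ : ℕ, ¬ SatisfiesCond b ρ := by
  by_contra hc
  push Not at hc
  apply h
  rw [EReal.eq_top_iff_forall_lt]
  intro y
  obtain ⟨n, hn⟩ := exists_nat_gt y
  refine lt_of_lt_of_le (b := ((n : ℝ) : EReal)) (by exact_mod_cast hn) ?_
  exact le_sSup ⟨n, rfl, hc n⟩

lemma dio_cond {A : Type*} (b : ℕ → A) (h : dioExp b = ⊤) (y : ℝ) :
    ∃ ρ : ℝ, y < ρ ∧ SatisfiesCond b ρ := by
  rw [EReal.eq_top_iff_forall_lt] at h
  obtain ⟨x, ⟨ρ, rfl, hρ⟩, hx⟩ := lt_sSup_iff.1 (h y)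
  exact ⟨ρ, by exact_mod_cast hx, hρ⟩

lemma exists_disagree {A : Type*} (b : ℕ → A) (hnup : ¬ UltimatelyPeriodic b) (i j : ℕ)
    (hij : i < j) : ∃ m, (∀ k < m, b (i+k) = b (j+k)) ∧ b (i+m) ≠ b (j+m) := by
  classical
  have hex : ∃ m, b (i+m) ≠ b (j+m) := by
    by_contra hc
    push Not at hc
    apply hnup
    refine ⟨i, j - i, by omega, fun n hn => ?_⟩
    have := hc (n - i)
    rw [show i + (n - i) = n by omega, show j + (n - i) = n + (j - i) by omega] at this
    exact this.symm
  exact ⟨Nat.find hex, fun k hk => not_not.1 (Nat.find_min hex hk), Nat.find_spec hex⟩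

lemma complexity_bound {A : Type*} (b : ℕ → A)
    (hcomp : Filter.limsup (fun n : ℕ => ((complexity b n : ℝ≥0∞)) / (n : ℝ≥0∞))
      Filter.atTop < ⊤) :
    ∃ κ n₀ : ℕ, ∀ n ≥ n₀, complexity b n ≤ ((κ * n : ℕ) : ℕ∞) := by
  obtain ⟨κ, hκ⟩ := ENNReal.exists_nat_gt hcomp.ne
  have := eventually_lt_of_limsup_lt hκ
  obtain ⟨n₀, hn⟩ := eventually_atTop.1 this
  refine ⟨κ, n₀ + 1, fun n hn' => ?_⟩
  have h1 := (hn n (by omega)).le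
  rw [ENNReal.div_le_iff (by simp; omega) (by simp)] at h1
  rw [← ENat.toENNReal_le]
  simpa using h1

lemma exists_repeat {A : Type*} (b : ℕ → A) (n N : ℕ) (h : complexity b n ≤ (N : ℕ∞)) :
    ∃ i j : ℕ, i < j ∧ j ≤ N ∧ ∀ k < n, b (i+k) = b (j+k) := by
  unfold complexity at h
  have hlt : {w : Fin n → A | ∃ i : ℕ, ∀ k : Fin n, w k = b (i + k)}.encard <
      (Set.Iic N).encard := by
    refine h.trans_lt ?_
    rw [Set.encard_eq_coe_toFinset_card]
    simp only [Set.toFinset_Iic, Nat.card_Iic]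
    exact_mod_cast Nat.lt_succ_self N
  obtain ⟨i, hi, j, hj, hne, he⟩ := Set.exists_ne_map_eq_of_encard_lt_of_maps_to hlt
    (f := fun i => fun k : Fin n => b (i + k)) (fun i _ => ⟨i, fun _ => rfl⟩)
  have he' : ∀ k < n, b (i+k) = b (j+k) := fun k hk => congrFun he ⟨k, hk⟩
  rcases lt_or_gt_of_ne hne with hl | hl
  · exact ⟨i, j, hl, hj, he'⟩
  · exact ⟨j, i, hl, hi, fun k hk => (he' k hk).symm⟩

lemma word_data {A : Type*} (b : ℕ → A) (hnup : ¬ UltimatelyPeriodic b)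
    (hcomp : Filter.limsup (fun n : ℕ => ((complexity b n : ℝ≥0∞)) / (n : ℝ≥0∞))
      Filter.atTop < ⊤) (hd : dioExp b ≠ ⊤) :
    ∃ κ ρ n₀ : ℕ, ∀ n ≥ n₀, ∃ i j m : ℕ, i < j ∧ j ≤ κ * n ∧ n ≤ m ∧ m ≤ ρ * j ∧
      (∀ k < m, b (i+k) = b (j+k)) ∧ b (i+m) ≠ b (j+m) := by
  obtain ⟨κ, n₁, hκ⟩ := complexity_bound b hcomp
  obtain ⟨ρ, hρ⟩ := dio_not_cond b hd
  have h2 := mt (to_cond b ρ) hρ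
  push Not at h2
  obtain ⟨n₂, hn₂⟩ := h2
  refine ⟨κ, ρ, n₁ + n₂, fun n hn => ?_⟩
  obtain ⟨i, j, hij, hj, hag⟩ := exists_repeat b n _ (hκ n (by omega))
  obtain ⟨m, hm, hm'⟩ := exists_disagree b hnup i j hij
  have hnm : n ≤ m := by
    by_contra hlt
    exact hm' (hag m (by omega))
  refine ⟨i, j, m, hij, hj, hnm, ?_, hm, hm'⟩
  by_contra hlt
  obtain ⟨k, hk, hk'⟩ := hn₂ i j m hij (by omega) (by omega)
  exact hk' (hm k hk)

lemma w2_top (b : ℕ → Polynomial Fq) (hdeg : ∀ n, 1 ≤ (b n).natDegree)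
    (B : ℕ) (hB : ∀ n, (b n).natDegree ≤ B) (hnup : ¬ UltimatelyPeriodic b)
    (ξ : K Fq) (hξ : IsCFOf Fq ξ (cfA Fq b)) (hd : dioExp b = ⊤) : wExp Fq 2 ξ = ⊤ := by
  rw [EReal.eq_top_iff_forall_lt]
  intro y
  obtain ⟨w, hw⟩ := exists_nat_gt y
  refine lt_of_lt_of_le (b := ((w : ℝ) : EReal)) (by exact_mod_cast hw) ?_
  refine le_sSup ⟨w, rfl, ?_⟩
  obtain ⟨ρ, hρ, hcond⟩ := dio_cond b hd (B + 2 * B * w + 2)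
  have hρ2 : 2 ≤ ρ := by
    have : (0:ℝ) ≤ B + 2 * B * w := by positivity
    linarith
  have key : ∀ N : ℕ, ∃ P : Polynomial (Polynomial Fq), (P.natDegree ≤ 2 ∧
      0 < kabs Fq (evalK Fq P ξ) ∧ kabs Fq (evalK Fq P ξ) ≤ Hpoly Fq P ^ (-(w:ℝ))) ∧
      kabs Fq (evalK Fq P ξ) ≤ qc Fq ^ ((B : ℤ) - 2 * N) := by
    intro N
    obtain ⟨i, j, m, hij, hN, hm, hag⟩ := of_cond b ρ hρ2 hcond N
    obtain ⟨A₁, A₂, A₃, g₁, g₂, g₃, hk⟩ := exists_quad b hdeg ξ hξ i j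
    obtain ⟨m', hm1, hm2⟩ := exists_disagree b hnup i j hij
    have lo := Zq_lower b hdeg B hB ξ hξ m' i j hm1 hm2
    have up := Zq_upper b hdeg B hB ξ hξ m i j hag
    rw [← eval_quad] at hk
    have hpos : 0 < kabs Fq (evalK Fq (quad A₁ A₂ A₃) ξ) := by
      rw [hk]
      exact mul_pos (zpow_pos qc_pos _) ((zpow_pos qc_pos _).trans_le lo)
    have hup : kabs Fq (evalK Fq (quad A₁ A₂ A₃) ξ) ≤ qc Fq ^ ((B : ℤ) - 2 * m) := by
      rw [hk]
      refine le_trans (mul_le_of_le_one_left (kabs_nonneg _) ?_) up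
      exact zpow_le_one_of_nonpos₀ qc_gt.le (by omega)
    refine ⟨quad A₁ A₂ A₃, ⟨quad_natDegree _ _ _, hpos, ?_⟩, ?_⟩
    · have hP : quad A₁ A₂ A₃ ≠ 0 := by
        intro h0
        rw [h0] at hpos
        simp [evalK, kabs_zero] at hpos
      obtain ⟨h, hH, -⟩ := H_eq _ hP
      have hle : Hpoly Fq (quad A₁ A₂ A₃) ≤ qc Fq ^ (Sd b i + Sd b j) :=
        H_le _ fun n => kabs_poly_le _ (quad_coeff_natDegree _ _ _ _ g₁ g₂ g₃ n)
      rw [hH, pow_le_pow_iff_right₀ qc_gt] at hle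
      have s1 := Sd_le b B hB i
      have s2 := Sd_le b B hB j
      have s3 : B * i ≤ B * j := Nat.mul_le_mul_left _ hij.le
      have hh : (h : ℝ) ≤ 2 * B * j := by
        have : h ≤ 2 * (B * j) := by omega
        have h' : (h : ℝ) ≤ ((2 * (B * j) : ℕ) : ℝ) := by exact_mod_cast this
        push_cast at h'; linarith
      refine hup.trans ?_
      rw [hH, ← Real.rpow_natCast, ← Real.rpow_mul qc_pos.le, ← Real.rpow_intCast,
        Real.rpow_le_rpow_left_iff qc_gt]
      push_cast
      have hj1 : (1 : ℝ) ≤ j := by exact_mod_cast (by omega : 1 ≤ j)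
      have hB0 : (0 : ℝ) ≤ B := by positivity
      have hw0 : (0 : ℝ) ≤ w := by positivity
      have t1 : (h : ℝ) * w ≤ 2 * B * j * w := mul_le_mul_of_nonneg_right hh hw0
      have t2 : (B + 2 * B * w + 1 : ℝ) * j ≤ m := by
        refine le_trans (mul_le_mul_of_nonneg_right ?_ (by linarith)) hm
        linarith
      have t3 : (B : ℝ) ≤ B * j := le_mul_of_one_le_right hB0 hj1
      have t4 : (0:ℝ) ≤ m := by positivity
      nlinarith
    · refine hup.trans (zpow_le_zpow_right₀ qc_gt.le (by omega))
  intro hfin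
  obtain ⟨P₀, hP₀, hmin⟩ := Set.exists_min_image _ (fun P => kabs Fq (evalK Fq P ξ)) hfin
    ⟨_, (key 0).choose_spec.1⟩
  have hpos : 0 < kabs Fq (evalK Fq P₀ ξ) := hP₀.2.1
  obtain ⟨n, hn⟩ := exists_pow_lt_of_lt_one hpos (inv_lt_one_of_one_lt₀ (qc_gt (Fq := Fq)))
  obtain ⟨P, hP, hPs⟩ := key (B + n)
  have h1 := hmin P hP
  have h2 : qc Fq ^ ((B : ℤ) - 2 * (B + n : ℕ)) ≤ (qc Fq)⁻¹ ^ n := by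
    rw [inv_pow, ← zpow_natCast, ← zpow_neg]
    exact zpow_le_zpow_right₀ qc_gt.le (by push_cast; omega)
  linarith

end helpers

theorem stmt5 (Fq : Type) [Field Fq] [Fintype Fq]
    (b : ℕ → Polynomial Fq) (hdeg : ∀ n, 1 ≤ (b n).natDegree)
    (hnup : ¬ UltimatelyPeriodic b)
    (hbdd : ∃ B : ℝ, ∀ n : ℕ, kabs Fq (polyToK Fq (b n)) ≤ B)
    (hcomp : Filter.limsup (fun n : ℕ => ((complexity b n : ℝ≥0∞)) / (n : ℝ≥0∞))
      Filter.atTop < ⊤)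
    (ξ : K Fq) (hξ : IsCFOf Fq ξ (cfA Fq b)) :
    dioExp b ≠ ⊤ ↔ ¬ (wExp Fq 2 ξ = ⊤ ∧ wExp Fq 1 ξ ≠ ⊤) := by
  obtain ⟨B₀, hB₀⟩ := hbdd
  obtain ⟨B, hB⟩ : ∃ B : ℕ, ∀ n, (b n).natDegree ≤ B := by
    obtain ⟨B, hB⟩ := pow_unbounded_of_one_lt B₀ (qc_gt (Fq := Fq))
    refine ⟨B, fun n => ?_⟩
    have h1 := (hB₀ n).trans hB.le
    rwa [kabs_b b hdeg, pow_le_pow_iff_right₀ qc_gt] at h1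
  constructor
  · rintro hd ⟨h2, -⟩
    obtain ⟨κ, ρ, n₀, hw⟩ := word_data b hnup hcomp hd
    obtain ⟨C, D, hCD⟩ := w2_bound b hdeg B hB ξ hξ κ ρ n₀ hw
    exact wExp_ne_top 2 ξ C D hCD h2
  · intro h hd
    exact h ⟨w2_top b hdeg B hB hnup ξ hξ hd, w1_bound b hdeg B hB ξ hξ⟩

end Ooto
end
end

section
/- Let P(X), Q(X) ∈ (F_q[T])[X] be non-constant polynomials of degrees m and n respectively. Let α be a root of P(X) of multiplicity t and β a root of Q(X) of multiplicity u (roots taken in the algebraic closure of F_q(T)). Assume P(β) ≠ 0. Then |P(β)| ≥ max(1, |β|)^m · H(P)^{−n/u + 1} · H(Q)^{−m/u}, and furthermore |α − β| ≥ max(1, |α|) · max(1, |β|) · H(P)^{−n/(tu)} · H(Q)^{−m/(tu)}. -/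
open Polynomial Filter
open scoped ENNReal

noncomputable section

namespace Ooto

variable (Fq : Type) [Field Fq] [Fintype Fq]

section Aux
variable {F : Type*} [Field F] {av : AbsoluteValue F ℝ}

lemma aux_gauss_X_sub_C (γ : F) : (X - C γ).gaussNorm av 1 = max 1 (av γ) := by
  apply le_antisymm
  · obtain ⟨i, hi⟩ := exists_eq_gaussNorm av 1 (X - C γ)
    rw [hi]
    rcases i with _ | _ | i
    · simp
    · simp [coeff_C]
    · simp [coeff_X, coeff_C]
  · apply max_le
    · have h := le_gaussNorm av (X - C γ) (c := 1) zero_le_one 1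
      have e : (X - C γ).coeff 1 = 1 := by simp [coeff_C]
      rw [e] at h
      simpa using h
    · have h := le_gaussNorm av (X - C γ) (c := 1) zero_le_one 0
      have e : (X - C γ).coeff 0 = -γ := by simp
      rw [e, av.map_neg] at h
      simpa using h

lemma aux_gauss_prod (hna : IsNonarchimedean av) (s : Multiset F) :
    ((s.map fun a => X - C a).prod).gaussNorm av 1 = (s.map fun a => max 1 (av a)).prod := by
  induction s using Multiset.induction with
  | empty => simpa using gaussNorm_C av 1 (1 : F)
  | cons a s ih =>
    simp only [Multiset.map_cons, Multiset.prod_cons]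
    rw [gaussNorm_mul hna zero_lt_one, ih, aux_gauss_X_sub_C]

lemma aux_gauss_splits (hna : IsNonarchimedean av) (p : F[X]) (hp : p.Splits) :
    p.gaussNorm av 1 = av p.leadingCoeff * (p.roots.map fun a => max 1 (av a)).prod := by
  conv_lhs => rw [hp.eq_prod_roots]
  rw [gaussNorm_mul hna zero_lt_one, gaussNorm_C, aux_gauss_prod hna]

lemma aux_eval_le (hna : IsNonarchimedean av) (p : F[X]) (x : F) :
    av (p.eval x) ≤ p.gaussNorm av 1 * max 1 (av x) ^ p.natDegree := by
  rw [eval_eq_sum_range]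
  have h0 : 0 ≤ p.gaussNorm av 1 := gaussNorm_nonneg av p zero_le_one
  obtain ⟨i, hi, h⟩ := IsNonarchimedean.finset_image_add_of_nonempty (f := av) hna
    (fun i => p.coeff i * x ^ i) (t := Finset.range (p.natDegree + 1)) ⟨0, by simp⟩
  refine h.trans ?_
  rw [map_mul, map_pow]
  have h1 : av (p.coeff i) ≤ p.gaussNorm av 1 := by
    simpa using le_gaussNorm av p (c := 1) zero_le_one i
  have h2 : av x ^ i ≤ max 1 (av x) ^ p.natDegree :=
    (pow_le_pow_left₀ (av.nonneg x) (le_max_right _ _) i).trans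
      (pow_le_pow_right₀ (le_max_left _ _) (by simp at hi; omega))
  exact mul_le_mul h1 h2 (pow_nonneg (av.nonneg _) _) h0

lemma aux_split_roots (q : F[X]) (β : F) : ∃ s : Multiset F,
    q.roots = Multiset.replicate (q.rootMultiplicity β) β + s := by
  classical
  obtain ⟨s, hs⟩ := Multiset.le_iff_exists_add.mp
    (Multiset.le_count_iff_replicate_le.mp (le_refl (q.roots.count β)))
  rw [count_roots] at hs
  exact ⟨s, hs⟩

lemma aux_multiset_le (s : Multiset F) (f g : F → ℝ) (hf : ∀ x, 0 ≤ f x) (h : ∀ x, f x ≤ g x) :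
    (s.map f).prod ≤ (s.map g).prod := by
  induction s using Multiset.induction with
  | empty => simp
  | cons a s ih =>
    simp only [Multiset.map_cons, Multiset.prod_cons]
    exact mul_le_mul (h a) ih (Multiset.prod_nonneg (by simp; intro b _; exact hf b))
      ((hf a).trans (h a))

lemma aux_av_prod (s : Multiset F) : av s.prod = (s.map av).prod := by
  exact map_multiset_prod av s

lemma aux_core (hna : IsNonarchimedean av) (p q : F[X]) (hq : q.Splits)
    (hres : 1 ≤ av (resultant q p)) (β : F) :
    max 1 (av β) ^ (p.natDegree * q.rootMultiplicity β) ≤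
      av (p.eval β) ^ (q.rootMultiplicity β) *
      p.gaussNorm av 1 ^ (q.natDegree - q.rootMultiplicity β) *
      q.gaussNorm av 1 ^ p.natDegree := by
  rw [resultant_eq_prod_eval q p _ le_rfl hq] at hres
  have hc := hq.natDegree_eq_card_roots
  rw [aux_gauss_splits hna q hq]
  obtain ⟨s, hs⟩ := aux_split_roots q β
  generalize q.rootMultiplicity β = u at *
  rw [hs] at hres hc ⊢
  simp only [Multiset.map_add, Multiset.prod_add, Multiset.map_replicate, Multiset.prod_replicate,
    map_mul, map_pow, aux_av_prod, Multiset.map_map, Multiset.card_add,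
    Multiset.card_replicate] at hres hc ⊢
  have hs' : q.natDegree - u = s.card := by omega
  rw [hs']
  have hle := aux_multiset_le s (av ∘ fun x => eval x p)
    (fun x => p.gaussNorm av 1 * max 1 (av x) ^ p.natDegree) (fun x => av.nonneg _)
    (fun x => aux_eval_le hna p x)
  rw [Multiset.prod_map_mul, Multiset.map_const', Multiset.prod_replicate,
    Multiset.prod_map_pow] at hle
  set M := max 1 (av β)
  have hM : 0 ≤ M := zero_le_one.trans (le_max_left _ _)
  set A := av (eval β p)
  have hA : 0 ≤ A := av.nonneg _
  set l := av q.leadingCoeff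
  have hl : 0 ≤ l := av.nonneg _
  set W := (Multiset.map (av ∘ fun x => eval x p) s).prod
  set Z := (Multiset.map (fun a => max 1 (av a)) s).prod
  set m := p.natDegree
  calc M ^ (m * u) ≤ M ^ (m * u) * (l ^ m * (A ^ u * W)) :=
        le_mul_of_one_le_right (pow_nonneg hM _) hres
    _ ≤ M ^ (m * u) * (l ^ m * (A ^ u * (p.gaussNorm av 1 ^ s.card * Z ^ m))) := by gcongr
    _ = _ := by rw [mul_pow, mul_pow, ← pow_mul, mul_comm u m]; ring

lemma aux_core2 (hna : IsNonarchimedean av) (p : F[X]) (hp : p.Splits) (α β : F) :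
    av (p.eval β) * (max 1 (av α) ^ (p.rootMultiplicity α) *
      max 1 (av β) ^ (p.rootMultiplicity α)) ≤
      av (α - β) ^ (p.rootMultiplicity α) * max 1 (av β) ^ p.natDegree * p.gaussNorm av 1 := by
  have hc := hp.natDegree_eq_card_roots
  rw [aux_gauss_splits hna p hp]
  have he : p.eval β = p.leadingCoeff * (p.roots.map fun a => β - a).prod := by
    conv_lhs => rw [hp.eq_prod_roots]
    simp [eval_mul, eval_multiset_prod, Multiset.map_map, Function.comp_def]
  rw [he]
  obtain ⟨s, hs⟩ := aux_split_roots p α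
  generalize p.rootMultiplicity α = t at *
  rw [hs] at hc ⊢
  simp only [Multiset.map_add, Multiset.prod_add, Multiset.map_replicate, Multiset.prod_replicate,
    map_mul, map_pow, aux_av_prod, Multiset.map_map, Multiset.card_add,
    Multiset.card_replicate] at hc ⊢
  have hle := aux_multiset_le s (av ∘ fun x => β - x)
    (fun x => max 1 (av β) * max 1 (av x)) (fun x => av.nonneg _)
    (fun x => by
      have h1 : av (β - x) ≤ max (av β) (av x) := by
        have := hna β (-x)
        rwa [← sub_eq_add_neg, av.map_neg] at this
      refine h1.trans (max_le ?_ ?_)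
      · exact (le_max_right 1 _).trans (le_mul_of_one_le_right
          (zero_le_one.trans (le_max_left _ _)) (le_max_left _ _))
      · exact (le_max_right 1 _).trans (le_mul_of_one_le_left
          (zero_le_one.trans (le_max_left _ _)) (le_max_left _ _)))
  rw [Multiset.prod_map_mul, Multiset.map_const', Multiset.prod_replicate] at hle
  rw [hc, av.map_sub β α]
  set B := max 1 (av β)
  have hB : 0 ≤ B := zero_le_one.trans (le_max_left _ _)
  set A := max 1 (av α)
  have hA : 0 ≤ A := zero_le_one.trans (le_max_left _ _)
  set l := av p.leadingCoeff
  have hl : 0 ≤ l := av.nonneg _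
  set d := av (α - β)
  have hd : 0 ≤ d := av.nonneg _
  set W := (Multiset.map (av ∘ fun x => β - x) s).prod
  set Z := (Multiset.map (fun a => max 1 (av a)) s).prod
  calc l * (d ^ t * W) * (A ^ t * B ^ t) ≤ l * (d ^ t * (B ^ s.card * Z)) * (A ^ t * B ^ t) := by
        gcongr
    _ = _ := by rw [pow_add]; ring

end Aux

lemma aux_common {R : Type*} [CommRing R] [IsDomain R] [NormalizedGCDMonoid R]
    (P Q : R[X]) (hQ : Q ≠ 0) (h : resultant Q P = 0) :
    ∃ G : R[X], 0 < G.natDegree ∧ G ∣ P ∧ G ∣ Q := by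
  classical
  let k := FractionRing R
  have hinj : Function.Injective (algebraMap R k) := FaithfulSMul.algebraMap_injective R k
  have h1 : resultant (Q.map (algebraMap R k)) (P.map (algebraMap R k)) = 0 := by
    rw [natDegree_map_eq_of_injective hinj, natDegree_map_eq_of_injective hinj,
      resultant_map_map, h, map_zero]
  rw [resultant_eq_zero_iff] at h1
  have h2 := h1.2
  rw [← EuclideanDomain.gcd_isUnit_iff] at h2
  set D := EuclideanDomain.gcd (Q.map (algebraMap R k)) (P.map (algebraMap R k)) with hD
  have hD0 : D ≠ 0 := by
    intro h0
    have : Q.map (algebraMap R k) = 0 := (EuclideanDomain.gcd_eq_zero_iff.mp h0).1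
    exact hQ ((Polynomial.map_eq_zero_iff hinj).mp this)
  set N := IsLocalization.integerNormalization (nonZeroDivisors R) D with hN
  obtain ⟨b, hbm, hb⟩ := IsLocalization.integerNormalization_spec (nonZeroDivisors R) D
  have hb0 : algebraMap R k b ≠ 0 := by
    simpa using nonZeroDivisors.ne_zero hbm
  have hb' : N.map (algebraMap R k) = C (algebraMap R k b) * D := by
    rw [hN, hb, ← smul_eq_C_mul, algebraMap_smul]
  have hu : IsUnit (C (algebraMap R k b)) := isUnit_C.mpr (isUnit_iff_ne_zero.mpr hb0)
  have hND : N.map (algebraMap R k) ∣ D := by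
    rw [hb']; exact (hu.mul_left_dvd).mpr dvd_rfl
  have hpp : N.primPart.map (algebraMap R k) ∣ D :=
    (Polynomial.map_dvd _ N.primPart_dvd).trans hND
  refine ⟨N.primPart, ?_, ?_, ?_⟩
  · rw [natDegree_primPart, ← natDegree_map_eq_of_injective hinj, hb',
      natDegree_C_mul hb0]
    by_contra h0
    exact h2 (isUnit_iff_degree_eq_zero.mpr (by
      rw [degree_eq_natDegree hD0]; simp at h0 ⊢; exact h0))
  · exact N.isPrimitive_primPart.dvd_of_fraction_map_dvd_fraction_map (K := k)
      (hpp.trans (EuclideanDomain.gcd_dvd_right _ _))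
  · exact N.isPrimitive_primPart.dvd_of_fraction_map_dvd_fraction_map (K := k)
      (hpp.trans (EuclideanDomain.gcd_dvd_left _ _))

section Aux2

lemma aux_coeff_polyToK (a : Polynomial Fq) (n : ℕ) :
    (polyToK Fq a).coeff (-(n : ℤ)) = a.coeff n := by
  have hT : ∀ k : ℕ, TT Fq ^ k = HahnSeries.single (-(k : ℤ)) (1 : Fq) := by
    intro k
    rw [TT, HahnSeries.single_pow]
    simp
  induction a using Polynomial.induction_on' with
  | add p q hp hq => rw [map_add, HahnSeries.coeff_add, hp, hq, coeff_add]
  | monomial k c =>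
    rw [polyToK, coe_eval₂RingHom, eval₂_monomial, hT, HahnSeries.C_apply,
      HahnSeries.single_mul_single, coeff_monomial, HahnSeries.coeff_single]
    simp [eq_comm]

lemma aux_one_le_kabs (a : Polynomial Fq) (ha : a ≠ 0) : 1 ≤ kabs Fq (polyToK Fq a) := by
  have h := aux_coeff_polyToK Fq a a.natDegree
  have hne : (polyToK Fq a).coeff (-(a.natDegree : ℤ)) ≠ 0 := by
    rw [h]; simpa using ha
  have h0 : polyToK Fq a ≠ 0 := by
    intro h0; rw [h0] at hne; simp at hne
  have ho := HahnSeries.order_le_of_coeff_ne_zero hne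
  rw [kabs, if_neg h0]
  apply one_le_zpow₀
  · exact_mod_cast Fintype.card_pos
  · omega

/-- The absolute value attached to `v`. -/
def auxAv (v : L Fq → ℝ) (hv : IsAbsExt Fq v) : AbsoluteValue (L Fq) ℝ where
  toFun := v
  map_mul' := hv.map_mul
  nonneg' := hv.nonneg
  eq_zero' := hv.eq_zero_iff
  add_le' x y := (hv.add_le x y).trans
    (max_le (le_add_of_nonneg_right (hv.nonneg y)) (le_add_of_nonneg_left (hv.nonneg x)))

variable {Fq} {v : L Fq → ℝ} (hv : IsAbsExt Fq v)

lemma auxAv_apply (x : L Fq) : auxAv Fq v hv x = v x := rfl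

lemma auxAv_na : IsNonarchimedean (auxAv Fq v hv) := fun x y => hv.add_le x y

lemma auxAv_φ (a : Polynomial Fq) : auxAv Fq v hv (φ Fq a) = kabs Fq (polyToK Fq a) :=
  hv.extends_kabs _

lemma aux_φ_inj : Function.Injective (φ Fq) := by
  rw [injective_iff_map_eq_zero]
  intro a ha
  by_contra h
  have h1 := aux_one_le_kabs Fq a h
  have h2 : polyToK Fq a = 0 := by
    have : toL Fq (polyToK Fq a) = 0 := ha
    exact (map_eq_zero _).mp this
  rw [h2, kabs, if_pos rfl] at h1
  exact absurd h1 (by norm_num)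

lemma aux_Hpoly (P : Polynomial (Polynomial Fq)) :
    Hpoly Fq P = (P.map (φ Fq)).gaussNorm (auxAv Fq v hv) 1 := by
  have hle : ∀ i, kabs Fq (polyToK Fq (P.coeff i)) ≤
      (P.map (φ Fq)).gaussNorm (auxAv Fq v hv) 1 := by
    intro i
    have h := le_gaussNorm (auxAv Fq v hv) (P.map (φ Fq)) (c := 1) zero_le_one i
    rwa [coeff_map, auxAv_φ, one_pow, mul_one] at h
  apply le_antisymm
  · exact ciSup_le hle
  · obtain ⟨i, hi⟩ := exists_eq_gaussNorm (auxAv Fq v hv) 1 (P.map (φ Fq))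
    rw [coeff_map, auxAv_φ, one_pow, mul_one] at hi
    rw [hi]
    exact le_ciSup (f := fun i => kabs Fq (polyToK Fq (P.coeff i)))
      ⟨_, Set.forall_mem_range.mpr hle⟩ i

include hv in
lemma aux_one_le_Hpoly (P : Polynomial (Polynomial Fq)) (hP : P ≠ 0) : 1 ≤ Hpoly Fq P := by
  rw [aux_Hpoly hv]
  have h := le_gaussNorm (auxAv Fq v hv) (P.map (φ Fq)) (c := 1) zero_le_one P.natDegree
  rw [coeff_map, auxAv_φ, one_pow, mul_one] at h
  exact (aux_one_le_kabs Fq _ (by simpa using hP)).trans h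

include hv in
lemma aux_Hpoly_mul (P Q : Polynomial (Polynomial Fq)) :
    Hpoly Fq (P * Q) = Hpoly Fq P * Hpoly Fq Q := by
  rw [aux_Hpoly hv, aux_Hpoly hv, aux_Hpoly hv, Polynomial.map_mul,
    gaussNorm_mul (auxAv_na hv) zero_lt_one]

lemma aux_evalL (P : Polynomial (Polynomial Fq)) (x : L Fq) :
    evalL Fq P x = (P.map (φ Fq)).eval x := by
  rw [evalL, eval_map]

include hv in
lemma aux_main (P : Polynomial (Polynomial Fq)) (hP : P ≠ 0) (β : L Fq)
    (hPβ : evalL Fq P β ≠ 0) (n : ℕ) :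
    ∀ Q : Polynomial (Polynomial Fq), Q ≠ 0 → Q.natDegree = n →
    max 1 (v β) ^ (P.natDegree * (Q.map (φ Fq)).rootMultiplicity β) ≤
      v (evalL Fq P β) ^ ((Q.map (φ Fq)).rootMultiplicity β) *
      Hpoly Fq P ^ (Q.natDegree - (Q.map (φ Fq)).rootMultiplicity β) *
      Hpoly Fq Q ^ P.natDegree := by
  induction n using Nat.strong_induction_on with
  | _ n ih =>
  intro Q hQ hn
  by_cases hres : resultant Q P = 0
  · letI : NormalizedGCDMonoid (Polynomial Fq) := Classical.choice inferInstance
    obtain ⟨G, hG, ⟨P', hP'⟩, ⟨Q', hQ'⟩⟩ := aux_common P Q hQ hres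
    have hG0 : G ≠ 0 := by rintro rfl; simp at hG
    have hQ0 : Q' ≠ 0 := by rintro rfl; simp at hQ'; exact hQ hQ'
    have hdeg : Q.natDegree = G.natDegree + Q'.natDegree := by
      rw [hQ', natDegree_mul hG0 hQ0]
    have h := ih Q'.natDegree (by omega) Q' hQ0 rfl
    have hGβ : (G.map (φ Fq)).rootMultiplicity β = 0 := by
      apply rootMultiplicity_eq_zero
      intro hr
      apply hPβ
      rw [aux_evalL, hP', Polynomial.map_mul, eval_mul, hr.eq_zero, zero_mul]
    have hmul : (Q.map (φ Fq)).rootMultiplicity β = (Q'.map (φ Fq)).rootMultiplicity β := by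
      rw [hQ', Polynomial.map_mul, rootMultiplicity_mul, hGβ, zero_add]
      rw [← Polynomial.map_mul, ← hQ']
      exact (Polynomial.map_ne_zero_iff aux_φ_inj).mpr hQ
    rw [hmul]
    have h1 : Hpoly Fq Q' ≤ Hpoly Fq Q := by
      rw [hQ', aux_Hpoly_mul hv]
      exact le_mul_of_one_le_left (zero_le_one.trans (aux_one_le_Hpoly hv _ hQ0))
        (aux_one_le_Hpoly hv _ hG0)
    have hp1 := aux_one_le_Hpoly hv P hP
    have hq1 := aux_one_le_Hpoly hv Q' hQ0
    have hv0 := hv.nonneg (evalL Fq P β)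
    refine h.trans ?_
    gcongr
    omega
  · have hr : 1 ≤ auxAv Fq v hv (resultant (Q.map (φ Fq)) (P.map (φ Fq))) := by
      rw [natDegree_map_eq_of_injective aux_φ_inj, natDegree_map_eq_of_injective aux_φ_inj,
        resultant_map_map, auxAv_φ]
      exact aux_one_le_kabs Fq _ hres
    have h := aux_core (auxAv_na hv) (P.map (φ Fq)) (Q.map (φ Fq))
      (IsAlgClosed.splits _) hr β
    rw [← aux_Hpoly, ← aux_Hpoly, natDegree_map_eq_of_injective aux_φ_inj,
      natDegree_map_eq_of_injective aux_φ_inj, ← aux_evalL] at h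
    exact h

lemma aux_real1 (B V p q : ℝ) (m n u : ℕ) (hu : 0 < u) (hun : u ≤ n) (hB : 1 ≤ B) (hV : 0 ≤ V)
    (hp : 1 ≤ p) (hq : 1 ≤ q) (h : B ^ (m * u) ≤ V ^ u * p ^ (n - u) * q ^ m) :
    B ^ (m : ℝ) * p ^ (-(n : ℝ) / (u : ℝ) + 1) * q ^ (-(m : ℝ) / (u : ℝ)) ≤ V := by
  have hp0 : 0 < p := by linarith
  have hq0 : 0 < q := by linarith
  have hB0 : 0 < B := by linarith
  have hu' : (u : ℝ) ≠ 0 := by positivity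
  refine le_of_pow_le_pow_left₀ hu.ne' hV ?_
  have e1 : (p ^ (-(n : ℝ) / (u : ℝ) + 1)) ^ u = (p ^ (n - u))⁻¹ := by
    rw [← Real.rpow_natCast, ← Real.rpow_mul hp0.le, ← Real.rpow_natCast p, ← Real.rpow_neg hp0.le]
    congr 1
    rw [Nat.cast_sub hun]; field_simp; ring
  have e2 : (q ^ (-(m : ℝ) / (u : ℝ))) ^ u = (q ^ m)⁻¹ := by
    rw [← Real.rpow_natCast, ← Real.rpow_mul hq0.le, ← Real.rpow_natCast q, ← Real.rpow_neg hq0.le]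
    congr 1
    field_simp
  rw [mul_pow, mul_pow, e1, e2, Real.rpow_natCast, ← pow_mul, ← div_eq_mul_inv, ← div_eq_mul_inv,
    div_div, div_le_iff₀ (by positivity)]
  linarith

lemma aux_real2 (A B V p q d : ℝ) (m n u t : ℕ) (hu : 0 < u) (ht : 0 < t)
    (hA : 1 ≤ A) (hB : 1 ≤ B) (hd : 0 ≤ d) (hp : 1 ≤ p) (hq : 1 ≤ q)
    (h1 : B ^ (m : ℝ) * p ^ (-(n : ℝ) / (u : ℝ) + 1) * q ^ (-(m : ℝ) / (u : ℝ)) ≤ V)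
    (h2 : V * (A ^ t * B ^ t) ≤ d ^ t * B ^ m * p) :
    A * B * p ^ (-(n : ℝ) / ((t : ℝ) * (u : ℝ))) * q ^ (-(m : ℝ) / ((t : ℝ) * (u : ℝ))) ≤ d := by
  have hp0 : 0 < p := by linarith
  have hq0 : 0 < q := by linarith
  have hB0 : 0 < B := by linarith
  have hA0 : 0 < A := by linarith
  have hu' : (u : ℝ) ≠ 0 := by positivity
  have ht' : (t : ℝ) ≠ 0 := by positivity
  refine le_of_pow_le_pow_left₀ ht.ne' hd ?_
  have e1 : (p ^ (-(n : ℝ) / ((t : ℝ) * (u : ℝ)))) ^ t = p ^ (-(n : ℝ) / (u : ℝ)) := by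
    rw [← Real.rpow_natCast, ← Real.rpow_mul hp0.le]
    congr 1
    field_simp
  have e2 : (q ^ (-(m : ℝ) / ((t : ℝ) * (u : ℝ)))) ^ t = q ^ (-(m : ℝ) / (u : ℝ)) := by
    rw [← Real.rpow_natCast, ← Real.rpow_mul hq0.le]
    congr 1
    field_simp
  rw [mul_pow, mul_pow, mul_pow, e1, e2]
  rw [Real.rpow_add_one hp0.ne', Real.rpow_natCast] at h1
  have h3 := (mul_le_mul_of_nonneg_right h1 (by positivity : 0 ≤ A ^ t * B ^ t)).trans h2
  have h4 : 0 < B ^ m * p := by positivity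
  refine le_of_mul_le_mul_right ?_ h4
  linarith

end Aux2

theorem stmt6 (Fq : Type) [Field Fq] [Fintype Fq]
    (v : L Fq → ℝ) (hv : IsAbsExt Fq v)
    (P Q : Polynomial (Polynomial Fq)) (hP : 0 < P.natDegree) (hQ : 0 < Q.natDegree)
    (α β : L Fq) (t u : ℕ)
    (hαroot : evalL Fq P α = 0) (ht : t = Polynomial.rootMultiplicity α (P.map (φ Fq)))
    (hβroot : evalL Fq Q β = 0) (hu : u = Polynomial.rootMultiplicity β (Q.map (φ Fq)))
    (hPβ : evalL Fq P β ≠ 0) :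
    max 1 (v β) ^ (P.natDegree : ℝ) * Hpoly Fq P ^ (-(Q.natDegree : ℝ) / (u : ℝ) + 1) *
        Hpoly Fq Q ^ (-(P.natDegree : ℝ) / (u : ℝ)) ≤ v (evalL Fq P β) ∧
    max 1 (v α) * max 1 (v β) * Hpoly Fq P ^ (-(Q.natDegree : ℝ) / ((t : ℝ) * (u : ℝ))) *
        Hpoly Fq Q ^ (-(P.natDegree : ℝ) / ((t : ℝ) * (u : ℝ))) ≤ v (α - β) := by
  have hP0 : P ≠ 0 := by rintro rfl; simp at hP
  have hQ0 : Q ≠ 0 := by rintro rfl; simp at hQ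
  have hPm : P.map (φ Fq) ≠ 0 := (Polynomial.map_ne_zero_iff aux_φ_inj).mpr hP0
  have hQm : Q.map (φ Fq) ≠ 0 := (Polynomial.map_ne_zero_iff aux_φ_inj).mpr hQ0
  have htpos : 0 < t := by
    rw [ht, rootMultiplicity_pos hPm, IsRoot, ← aux_evalL]; exact hαroot
  have hupos : 0 < u := by
    rw [hu, rootMultiplicity_pos hQm, IsRoot, ← aux_evalL]; exact hβroot
  have hun : u ≤ Q.natDegree := by
    classical
    rw [hu, ← natDegree_map_eq_of_injective aux_φ_inj Q, ← count_roots]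
    exact (Multiset.count_le_card _ _).trans (card_roots' _)
  have hp1 := aux_one_le_Hpoly hv P hP0
  have hq1 := aux_one_le_Hpoly hv Q hQ0
  have h1 := aux_main hv P hP0 β hPβ _ Q hQ0 rfl
  rw [← hu] at h1
  have h1' := aux_real1 _ _ _ _ _ _ _ hupos hun (le_max_left _ _) (hv.nonneg _) hp1 hq1 h1
  refine ⟨h1', ?_⟩
  have h2 := aux_core2 (auxAv_na hv) (P.map (φ Fq)) (IsAlgClosed.splits _) α β
  rw [← aux_Hpoly, natDegree_map_eq_of_injective aux_φ_inj, ← aux_evalL, ← ht] at h2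
  exact aux_real2 _ _ _ _ _ _ _ _ _ _ hupos htpos (le_max_left _ _) (le_max_left _ _)
    (hv.nonneg _) hp1 hq1 h1' h2

end Ooto
end
end
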